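/- arXiv:2408.06172 — 2 statements merged into one kernel-verified Lean document; each statement's English description precedes it below -/
import Mathlib

section
/- Let n ≥ 1, let p > −n−1, and let K be a smooth, strictly convex body in ℝ^{n+1} with positive support function h satisfying det(A(x) + x⊗x) = h(x)^{p−1} for all x ∈ S^n (i.e. dV = h^p dθ). Set c := (∫ ∇h_K h^p dθ)/(∫ h^p dθ) and h̃(x) := h(x) − ⟨x, c⟩. Then ∫_{S^n} (|∇h_K(x)|² − h(x)²) h^p dθ = ∫_{S^n} (|∇h_K(x) − c|² − h̃(x)²) h^p dθ + (n(n+1−p)|c|²/((n+1)(n+1+p)))·∫_{S^n} h^p dθ; equivalently ∫|∇̄h|² dV = ∫|∇̄h̃|² dV + (n(n+1−p)|c|²/((n+1)(n+1+p)))·∫ dV. -/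
open MeasureTheory Metric Real
open scoped InnerProductSpace ENNReal Topology

noncomputable section

/-- Euclidean space `ℝ^{n+1}`. -/
abbrev Eu (n : ℕ) : Type := EuclideanSpace ℝ (Fin (n + 1))

/-- The unit sphere `S^n ⊆ ℝ^{n+1}` as a subtype. -/
abbrev Sph (n : ℕ) : Type := Metric.sphere (0 : Eu n) 1

/-- The spherical Lebesgue (surface) measure on `S^n`. -/
def sphMeas (n : ℕ) : Measure (Sph n) := (volume : Measure (Eu n)).toSphere

/-- The support function of a set `K ⊆ ℝ^{n+1}`. -/
def sfn {n : ℕ} (K : Set (Eu n)) (z : Eu n) : ℝ :=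
  sSup ((fun y => ⟪z, y⟫_ℝ) '' K)

/-- The Hessian endomorphism `A(x) = D(∇ h_K)(x)`. -/
def hessA {n : ℕ} (K : Set (Eu n)) (x : Eu n) : Eu n →L[ℝ] Eu n :=
  fderiv ℝ (gradient (sfn K)) x

/-- The rank-one endomorphism `x ⊗ x : v ↦ ⟨v, x⟩ x`. -/
def tens {n : ℕ} (x : Eu n) : Eu n →L[ℝ] Eu n :=
  (innerSL ℝ x).smulRight x

/-- `det (A(x) + x ⊗ x)`, the reciprocal Gauss curvature `1/𝒦` at `x ∈ S^n`. -/
def rK {n : ℕ} (K : Set (Eu n)) (x : Eu n) : ℝ :=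
  LinearMap.det ((hessA K x + tens x : Eu n →L[ℝ] Eu n) : Eu n →ₗ[ℝ] Eu n)

/-- `K` is a smooth, strictly convex body with positive support function. -/
structure IsSmoothConvexBody {n : ℕ} (K : Set (Eu n)) : Prop where
  compact : IsCompact K
  convex : Convex ℝ K
  interior_nonempty : (interior K).Nonempty
  pos : ∀ x : Sph n, 0 < sfn K x
  smooth : ContDiffOn ℝ (⊤ : ℕ∞) (sfn K) {(0 : Eu n)}ᶜ
  posdef : ∀ x : Sph n, ∀ v : Eu n, v ≠ 0 →
    0 < ⟪(hessA K (x : Eu n) + tens (x : Eu n)) v, v⟫_ℝ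

/-- The density `h·det(A + x⊗x)` of the measure `dV` with respect to `dθ`. -/
def dens {n : ℕ} (K : Set (Eu n)) (x : Eu n) : ℝ := sfn K x * rK K x

/-- The centroid-type point `c(K) = (∫ ∇h_K dV)/(∫ dV)`. -/
def cK {n : ℕ} (K : Set (Eu n)) : Eu n :=
  (∫ x : Sph n, dens K x ∂sphMeas n)⁻¹ •
    ∫ x : Sph n, dens K x • gradient (sfn K) x ∂sphMeas n

/-- The support function of the translated body `K - c(K)`. -/
def tsfn {n : ℕ} (K : Set (Eu n)) (x : Eu n) : ℝ := sfn K x - ⟪x, cK K⟫_ℝ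

/-! Polar coordinates turn `∫ ∂ᵥ(F φ(‖·‖)) = 0` into the divergence formula
`∫ ∂ᵥF dθ = (n + α) ∫ F ⟪x, v⟫ dθ` for `F` homogeneous of degree `α`. The inverse Gauss map
`x ↦ ∇h_K(x)` parametrizes `∂K`, and its `1`-homogeneous extension has Jacobian `h det(A + x⊗x)`;
hence the moments of `K` are integrals over the sphere, and translating `K` by `±w` in the first
moment gives `∫ ⟪v, ∇h_K⟫ ⟪x, w⟫ det(A + x⊗x) dθ = ⟪v, w⟫ Vol K`.

When `det(A + x⊗x) = h ^ (p - 1)`, this identity and the divergence formula for `h ^ p ⟪x, c⟫` show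
`∫ ⟪x, c⟫² h ^ p dθ = |c|² / (n + 1) ∫ h ^ p dθ`, while the divergence formula for `h ^ (p + 1)`
computes `∫ h ^ (p + 1) ⟪x, c⟫ dθ` from `∫ ⟪∇h_K, c⟫ h ^ p dθ = |c|² ∫ h ^ p dθ`. Expanding the
squares in the difference of the two sides leaves only these integrals. -/

theorem exists_eq_smul_sphere {E : Type*} [NormedAddCommGroup E] [NormedSpace ℝ E] {z : E}
    (hz : z ≠ 0) : ∃ x : sphere (0 : E) 1, z = ‖z‖ • (x : E) :=
  ⟨⟨‖z‖⁻¹ • z, by simp [norm_smul, hz]⟩, (smul_inv_smul₀ (norm_ne_zero_iff.2 hz) z).symm⟩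

section PosHomogeneous

variable {E G : Type*} [NormedAddCommGroup E] [NormedSpace ℝ E] [NormedAddCommGroup G]
  [NormedSpace ℝ G] {α β : ℝ} {f : E → G} {g : E → ℝ} {z : E}

/-- `f` is positively homogeneous of real degree `α` away from the origin; the value at `0`, where
the derivatives of `f` usually do not exist, is left free. -/
def IsPosHomogeneous (α : ℝ) (f : E → G) : Prop :=
  ∀ ⦃z : E⦄, z ≠ 0 → ∀ ⦃r : ℝ⦄, 0 < r → f (r • z) = r ^ α • f z

theorem isPosHomogeneous_norm : IsPosHomogeneous 1 (norm : E → ℝ) := fun z _ r hr => by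
  rw [norm_smul_of_nonneg hr.le, rpow_one, smul_eq_mul]

theorem isPosHomogeneous_clm (L : E →L[ℝ] G) : IsPosHomogeneous 1 L := fun z _ r _ => by
  rw [map_smul, rpow_one]

namespace IsPosHomogeneous

theorem clm_comp {H : Type*} [NormedAddCommGroup H] [NormedSpace ℝ H]
    (hf : IsPosHomogeneous α f) (L : G →L[ℝ] H) : IsPosHomogeneous α fun z => L (f z) :=
  fun z hz r hr => by simp only [hf hz hr, map_smul]

theorem smul (hg : IsPosHomogeneous α g) (hf : IsPosHomogeneous β f) :
    IsPosHomogeneous (α + β) fun z => g z • f z := fun z hz r hr => by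
  simp only [hg hz hr, hf hz hr, rpow_add hr, smul_eq_mul, smul_smul, mul_right_comm]

theorem mul {k : E → ℝ} (hg : IsPosHomogeneous α g) (hk : IsPosHomogeneous β k) :
    IsPosHomogeneous (α + β) fun z => g z * k z :=
  hg.smul hk

theorem rpow (hg : IsPosHomogeneous α g) (hpos : ∀ z ≠ 0, 0 < g z) (s : ℝ) :
    IsPosHomogeneous (α * s) fun z => g z ^ s := fun z hz r hr => by
  beta_reduce
  rw [hg hz hr, smul_eq_mul, mul_rpow (rpow_nonneg hr.le α) (hpos z hz).le, ← rpow_mul hr.le,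
    smul_eq_mul]

theorem fderiv (hf : IsPosHomogeneous α f) : IsPosHomogeneous (α - 1) (fderiv ℝ f) :=
  fun z hz r hr => by
    have h : (fun w => f (r • w)) =ᶠ[𝓝 z] fun w => r ^ α • f w := by
      filter_upwards [isOpen_ne.mem_nhds hz] with w hw using hf hw hr
    have hderiv : r • _root_.fderiv ℝ f (r • z) = r ^ α • _root_.fderiv ℝ f z := by
      rw [← fderiv_comp_smul, h.fderiv_eq]
      exact congrFun (fderiv_const_smul_field (r ^ α)) z
    rw [rpow_sub hr, rpow_one, div_eq_inv_mul, mul_smul, ← hderiv, inv_smul_smul₀ hr.ne']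

theorem fderiv_apply (hf : IsPosHomogeneous α f) (v : E) :
    IsPosHomogeneous (α - 1) fun z => _root_.fderiv ℝ f z v :=
  hf.fderiv.clm_comp (ContinuousLinearMap.apply ℝ G v)

theorem fderiv_apply_self (hf : IsPosHomogeneous α f) (hz : z ≠ 0)
    (hd : DifferentiableAt ℝ f z) : _root_.fderiv ℝ f z z = α • f z := by
  have hline : HasDerivAt (fun r : ℝ => r • z) z 1 := by
    simpa using (hasDerivAt_id (1 : ℝ)).smul_const z
  have hcomp : HasDerivAt (fun r : ℝ => f (r • z)) (_root_.fderiv ℝ f z z) 1 := by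
    have hd' : HasFDerivAt f (_root_.fderiv ℝ f z) ((1 : ℝ) • z) := by
      simpa using hd.hasFDerivAt
    exact hd'.comp_hasDerivAt 1 hline
  have hpow : HasDerivAt (fun r : ℝ => r ^ α • f z) (α • f z) 1 := by
    simpa using (hasDerivAt_rpow_const (p := α) (Or.inl one_ne_zero)).smul_const (f z)
  refine hcomp.unique (hpow.congr_of_eventuallyEq ?_)
  filter_upwards [lt_mem_nhds one_pos] with r hr using hf hz hr

theorem exists_sphere_forall_le {f : E → ℝ} [FiniteDimensional ℝ E] [Nontrivial E]
    (hf : IsPosHomogeneous 0 f) (hc : ContinuousOn f {0}ᶜ) :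
    ∃ x : sphere (0 : E) 1, ∀ z ≠ 0, f z ≤ f x := by
  obtain ⟨x, hx, hmax⟩ := (isCompact_sphere (0 : E) 1).exists_isMaxOn
    (NormedSpace.sphere_nonempty.2 zero_le_one)
    (hc.mono fun x hx => ne_zero_of_mem_unit_sphere ⟨x, hx⟩)
  refine ⟨⟨x, hx⟩, fun z hz => ?_⟩
  obtain ⟨u, hu⟩ := exists_eq_smul_sphere hz
  rw [hu, hf (ne_zero_of_mem_unit_sphere u) (norm_pos_iff.2 hz), rpow_zero, one_smul]
  exact hmax u.2

end IsPosHomogeneous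

theorem IsPosHomogeneous.gradient {F : Type*} [NormedAddCommGroup F] [InnerProductSpace ℝ F]
    [CompleteSpace F] {f : F → ℝ} (hf : IsPosHomogeneous α f) :
    IsPosHomogeneous (α - 1) (gradient f) :=
  hf.fderiv.clm_comp
    (InnerProductSpace.toDual ℝ F).symm.toContinuousLinearEquiv.toContinuousLinearMap

end PosHomogeneous

section SphereIntegrals

variable {E : Type*} [NormedAddCommGroup E] [NormedSpace ℝ E] [MeasurableSpace E] [BorelSpace E]
  [FiniteDimensional ℝ E] [Nontrivial E] (μ : Measure E) [μ.IsAddHaarMeasure]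

theorem integral_eq_integral_sphere_Ioi {f : E → ℝ} (hf : Integrable f μ) :
    ∫ z, f z ∂μ = ∫ x : sphere (0 : E) 1, (∫ r in Set.Ioi (0 : ℝ),
      r ^ (Module.finrank ℝ E - 1) * f (r • (x : E))) ∂μ.toSphere := by
  have hmeas : MeasurableSet ({0}ᶜ : Set E) := (measurableSet_singleton _).compl
  have hmp := μ.measurePreserving_homeomorphUnitSphereProd
  have hemb := (homeomorphUnitSphereProd E).measurableEmbedding
  let k : sphere (0 : E) 1 × Set.Ioi (0 : ℝ) → ℝ := fun w => f ((w.2 : ℝ) • (w.1 : E))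
  have hk : k ∘ homeomorphUnitSphereProd E = fun z : ({0}ᶜ : Set E) => f z := funext fun z => by
    obtain ⟨w, rfl⟩ := (homeomorphUnitSphereProd E).symm.surjective z
    simp only [Function.comp_apply, Homeomorph.apply_symm_apply,
      homeomorphUnitSphereProd_symm_apply_coe, k]
  have hint : Integrable k (μ.toSphere.prod (.volumeIoiPow (Module.finrank ℝ E - 1))) := by
    rw [← hmp.integrable_comp_emb hemb, hk]
    exact (integrableOn_iff_comap_subtypeVal hmeas).1 hf.integrableOn
  calc ∫ z, f z ∂μ = ∫ z : ({0}ᶜ : Set E), f z ∂μ.comap (↑) := by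
        rw [integral_subtype_comap hmeas, restrict_compl_singleton]
    _ = ∫ w, k w ∂μ.toSphere.prod (.volumeIoiPow (Module.finrank ℝ E - 1)) := by
        rw [← hmp.integral_comp hemb]
        exact congrArg (integral _) hk.symm
    _ = _ := by
        rw [integral_prod _ hint]
        refine integral_congr_ae (.of_forall fun x => ?_)
        simp only [Measure.volumeIoiPow, k]
        rw [integral_withDensity_eq_integral_toReal_smul (by fun_prop) (by simp),
          ← integral_subtype_comap measurableSet_Ioi
            fun r : ℝ => r ^ (Module.finrank ℝ E - 1) * f (r • (x : E))]
        refine integral_congr_ae (.of_forall fun r => ?_)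
        simp only [smul_eq_mul]
        rw [ENNReal.toReal_ofReal (pow_nonneg r.2.out.le _)]

end SphereIntegrals

section RadialCutoff

/-- A continuous real function with compact support in `(0, ∞)`. Composed with the norm it cuts test
functions off near the origin and near infinity. -/
structure IsRadialCutoff (ψ : ℝ → ℝ) : Prop where
  continuous : Continuous ψ
  hasCompactSupport : HasCompactSupport ψ
  tsupport_subset : tsupport ψ ⊆ Set.Ioi 0

/-- A smooth bump function supported in the interval `[1/2, 3/2]`. -/
def annularBump : ContDiffBump (1 : ℝ) := ⟨1 / 4, 1 / 2, by norm_num, by norm_num⟩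

theorem isRadialCutoff_annularBump : IsRadialCutoff annularBump where
  continuous := annularBump.continuous
  hasCompactSupport := annularBump.hasCompactSupport
  tsupport_subset := by
    rw [annularBump.tsupport_eq, closedBall_eq_Icc]
    exact fun r hr => lt_of_lt_of_le (by norm_num [annularBump]) hr.1

theorem isRadialCutoff_mul_deriv_annularBump :
    IsRadialCutoff fun r => r * deriv annularBump r where
  continuous := continuous_id.mul (annularBump.contDiff.continuous_deriv le_rfl)
  hasCompactSupport := annularBump.hasCompactSupport.deriv.mul_left
  tsupport_subset := (tsupport_mul_subset_right.trans tsupport_deriv_subset).trans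
    isRadialCutoff_annularBump.tsupport_subset

theorem integral_Ioi_deriv_annularBump : ∫ r in Set.Ioi (0 : ℝ), deriv annularBump r = 0 := by
  rw [annularBump.hasCompactSupport.integral_Ioi_deriv_eq annularBump.contDiff, neg_eq_zero]
  exact image_eq_zero_of_notMem_tsupport fun h =>
    (Set.mem_Ioi.1 (isRadialCutoff_annularBump.tsupport_subset h)).false

theorem integral_Ioi_inv_mul_annularBump_pos :
    0 < ∫ r in Set.Ioi (0 : ℝ), r⁻¹ * annularBump r := by
  have hcont : Continuous fun r : ℝ => r⁻¹ * annularBump r :=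
    continuous_of_tsupport fun r hr =>
      have hr0 : 0 < r :=
        isRadialCutoff_annularBump.tsupport_subset (tsupport_mul_subset_right hr)
      (continuousAt_inv₀ hr0.ne').mul annularBump.continuous.continuousAt
  have hint := hcont.integrable_of_hasCompactSupport (μ := volume)
    annularBump.hasCompactSupport.mul_left
  refine (setIntegral_pos_iff_support_of_nonneg_ae ?_ hint.integrableOn).2 ?_
  · exact (ae_restrict_iff' measurableSet_Ioi).2 <| .of_forall fun r hr =>
      mul_nonneg (inv_nonneg.2 (Set.mem_Ioi.1 hr).le) annularBump.nonneg
  · have hone : (1 : ℝ) ∈ Function.support (fun r : ℝ => r⁻¹ * annularBump r) ∩ Set.Ioi 0 := by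
      refine ⟨?_, Set.mem_Ioi.2 one_pos⟩
      rw [Function.mem_support,
        annularBump.one_of_mem_closedBall (mem_closedBall_self annularBump.rIn_pos.le)]
      norm_num
    exact (hcont.isOpen_support.inter isOpen_Ioi).measure_pos _ ⟨1, hone⟩

variable {E : Type*} [NormedAddCommGroup E] [NormedSpace ℝ E] [FiniteDimensional ℝ E]
  [MeasurableSpace E] [BorelSpace E] (μ : Measure E) [μ.IsAddHaarMeasure] {G : E → ℝ} {ψ : ℝ → ℝ}

theorem IsRadialCutoff.integrable_mul_comp_norm (hψ : IsRadialCutoff ψ)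
    (hG : ContinuousOn G {0}ᶜ) : Integrable (fun z => G z * ψ ‖z‖) μ := by
  have hcont : Continuous fun z => G z * ψ ‖z‖ := continuous_of_tsupport fun z hz =>
    have hz0 : z ≠ 0 := norm_pos_iff.1 <| hψ.tsupport_subset <|
      tsupport_comp_subset_preimage ψ continuous_norm (tsupport_mul_subset_right hz)
    (hG.continuousAt (isOpen_compl_singleton.mem_nhds hz0)).mul
      (hψ.continuous.comp continuous_norm).continuousAt
  obtain ⟨R, hR⟩ := hψ.hasCompactSupport.isCompact.isBounded.subset_closedBall 0
  have hsupp : HasCompactSupport fun z : E => ψ ‖z‖ :=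
    .intro (isCompact_closedBall 0 R) fun z hz => image_eq_zero_of_notMem_tsupport fun h => hz <| by
      simpa using hR h
  exact hcont.integrable_of_hasCompactSupport hsupp.mul_left

variable [Nontrivial E] {β : ℝ}

theorem IsPosHomogeneous.integral_mul_comp_norm (hG : IsPosHomogeneous β G)
    (hint : Integrable (fun z => G z * ψ ‖z‖) μ) :
    ∫ z, G z * ψ ‖z‖ ∂μ = (∫ x : sphere (0 : E) 1, G x ∂μ.toSphere) *
      ∫ r in Set.Ioi (0 : ℝ), r ^ (Module.finrank ℝ E - 1 + β) * ψ r := by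
  rw [integral_eq_integral_sphere_Ioi μ hint, ← integral_mul_const]
  refine integral_congr_ae (.of_forall fun x => ?_)
  beta_reduce
  rw [← integral_const_mul]
  refine setIntegral_congr_fun measurableSet_Ioi fun r (hr : 0 < r) => ?_
  simp only [hG (ne_zero_of_mem_unit_sphere x) hr, norm_smul_of_nonneg hr.le,
    norm_eq_of_mem_sphere x, mul_one, smul_eq_mul, rpow_add hr,
    ← Nat.cast_pred Module.finrank_pos, rpow_natCast]
  ring

theorem IsPosHomogeneous.integral_mul_comp_norm_of_isRadialCutoff
    (hGh : IsPosHomogeneous (-Module.finrank ℝ E) G) (hG : ContinuousOn G {0}ᶜ)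
    (hψ : IsRadialCutoff ψ) :
    ∫ z, G z * ψ ‖z‖ ∂μ =
      (∫ x : sphere (0 : E) 1, G x ∂μ.toSphere) * ∫ r in Set.Ioi (0 : ℝ), r⁻¹ * ψ r := by
  have hexp : (Module.finrank ℝ E - 1 + -Module.finrank ℝ E : ℝ) = -1 := by ring
  simp only [hGh.integral_mul_comp_norm μ (hψ.integrable_mul_comp_norm μ hG), hexp, rpow_neg_one]

theorem IsPosHomogeneous.setIntegral_closedBall (hG : IsPosHomogeneous β G)
    (hβ : 0 < Module.finrank ℝ E + β) (hint : IntegrableOn G (closedBall 0 1) μ) :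
    ∫ z in closedBall (0 : E) 1, G z ∂μ =
      (∫ x : sphere (0 : E) 1, G x ∂μ.toSphere) / (Module.finrank ℝ E + β) := by
  have hindicator : (closedBall (0 : E) 1).indicator G =
      fun z => G z * (Set.Iic (1 : ℝ)).indicator 1 ‖z‖ := by
    classical
    ext z
    simp [Set.indicator_apply]
  have hradial : ∫ r in Set.Ioi (0 : ℝ), r ^ (Module.finrank ℝ E - 1 + β) *
      (Set.Iic (1 : ℝ)).indicator 1 r = (Module.finrank ℝ E + β)⁻¹ := by
    have hset : (fun r : ℝ => r ^ (Module.finrank ℝ E - 1 + β) * (Set.Iic (1 : ℝ)).indicator 1 r) =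
        (Set.Iic (1 : ℝ)).indicator fun r => r ^ (Module.finrank ℝ E - 1 + β) := by
      ext r
      simp [Set.indicator_apply]
    rw [hset, setIntegral_indicator measurableSet_Iic, Set.Ioi_inter_Iic,
      ← intervalIntegral.integral_of_le zero_le_one, integral_rpow (Or.inl (by linarith)),
      one_rpow, zero_rpow (by linarith), sub_zero, one_div]
    ring_nf
  rw [← integrable_indicator_iff measurableSet_closedBall, hindicator] at hint
  rw [← integral_indicator measurableSet_closedBall, hindicator, hG.integral_mul_comp_norm μ hint,
    hradial, div_eq_mul_inv]

end RadialCutoff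

section Divergence

theorem integral_fderiv_apply_eq_zero {E : Type*} [NormedAddCommGroup E] [NormedSpace ℝ E]
    [FiniteDimensional ℝ E] [MeasurableSpace E] [BorelSpace E] (μ : Measure E)
    [μ.IsAddHaarMeasure] {f : E → ℝ} {v : E} (hf : Integrable f μ)
    (hf' : Integrable (fun z => fderiv ℝ f z v) μ) (hd : Differentiable ℝ f) :
    ∫ z, fderiv ℝ f z v ∂μ = 0 := by
  simpa using integral_mul_fderiv_eq_neg_fderiv_mul_of_integrable (μ := μ) (f := fun _ => (1 : ℝ))
    (g := f) (v := v) (by simp) (by simpa using hf') (by simpa using hf)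
    (fun _ _ => differentiableAt_const _) (fun z _ => hd z)

theorem differentiableAt_of_contDiffOn_compl_zero {E G : Type*} [NormedAddCommGroup E]
    [NormedSpace ℝ E] [NormedAddCommGroup G] [NormedSpace ℝ G] {F : E → G}
    (hF : ContDiffOn ℝ 1 F {0}ᶜ) {z : E} (hz : z ≠ 0) : DifferentiableAt ℝ F z :=
  (hF.contDiffAt (isOpen_compl_singleton.mem_nhds hz)).differentiableAt one_ne_zero

theorem continuousOn_fderiv_apply {E G : Type*} [NormedAddCommGroup E]
    [NormedSpace ℝ E] [NormedAddCommGroup G] [NormedSpace ℝ G] {F : E → G}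
    (hF : ContDiffOn ℝ 1 F {0}ᶜ) (v : E) : ContinuousOn (fun z => fderiv ℝ F z v) {0}ᶜ :=
  (hF.continuousOn_fderiv_of_isOpen isOpen_compl_singleton le_rfl).clm_apply continuousOn_const

variable {E : Type*} [NormedAddCommGroup E] [InnerProductSpace ℝ E]

theorem fderiv_norm_apply_sphere (x : sphere (0 : E) 1) (v : E) :
    fderiv ℝ norm (x : E) v = ⟪(x : E), v⟫_ℝ := by
  have hd := ((contDiffAt_norm ℝ (ne_zero_of_mem_unit_sphere x)).differentiableAt
    one_ne_zero).hasFDerivAt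
  have h := congrArg (· v) ((hd.pow 2).unique (hasStrictFDerivAt_norm_sq (x : E)).hasFDerivAt)
  simpa using h

theorem contDiffOn_norm : ContDiffOn ℝ 1 (norm : E → ℝ) {0}ᶜ := fun _ hz =>
  (contDiffAt_norm ℝ hz).contDiffWithinAt

theorem fderiv_mul_rpow_of_eq_one {E : Type*} [NormedAddCommGroup E] [NormedSpace ℝ E]
    {F N : E → ℝ} {z : E} (hF : DifferentiableAt ℝ F z) (hN : DifferentiableAt ℝ N z)
    (hz : N z = 1) (s : ℝ) (v : E) :
    fderiv ℝ (fun w => F w * N w ^ s) z v = fderiv ℝ F z v + s * (F z * fderiv ℝ N z v) := by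
  have hpow := hN.hasFDerivAt.rpow_const (p := s) (Or.inl (by rw [hz]; exact one_ne_zero))
  rw [(hF.hasFDerivAt.fun_mul hpow).fderiv]
  simp only [hz, one_rpow, mul_one, one_smul, add_apply, smul_apply, smul_eq_mul]
  ring

variable {F : E → ℝ} {α : ℝ}

theorem differentiable_mul_annularBump_norm (hF : ContDiffOn ℝ 1 F {0}ᶜ) :
    Differentiable ℝ fun z => F z * annularBump ‖z‖ := fun z => by
  by_cases hz : z ∈ tsupport fun z : E => annularBump ‖z‖
  · have hz0 : z ≠ 0 := norm_pos_iff.1 <| isRadialCutoff_annularBump.tsupport_subset <|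
      tsupport_comp_subset_preimage annularBump continuous_norm hz
    exact (differentiableAt_of_contDiffOn_compl_zero hF hz0).mul <|
      (annularBump.contDiff.differentiable one_ne_zero ‖z‖).comp z <|
        differentiableAt_of_contDiffOn_compl_zero contDiffOn_norm hz0
  · refine (differentiableAt_const (0 : ℝ)).congr_of_eventuallyEq ?_
    filter_upwards [notMem_tsupport_iff_eventuallyEq.1 hz] with w hw
    rw [hw, Pi.zero_apply, mul_zero]

theorem fderiv_mul_annularBump_norm (hF : ContDiffOn ℝ 1 F {0}ᶜ) {z : E} (hz : z ≠ 0) (v : E) :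
    fderiv ℝ (fun z => F z * annularBump ‖z‖) z v = fderiv ℝ F z v * annularBump ‖z‖ +
      F z * (‖z‖ ^ (-1 : ℝ) * fderiv ℝ norm z v) * (‖z‖ * deriv annularBump ‖z‖) := by
  have hFd := (differentiableAt_of_contDiffOn_compl_zero hF hz).hasFDerivAt
  have hNd := (differentiableAt_of_contDiffOn_compl_zero contDiffOn_norm hz).hasFDerivAt
  have hbump := (annularBump.contDiff.differentiable one_ne_zero ‖z‖).hasDerivAt
  have hprod := hFd.fun_mul (hbump.comp_hasFDerivAt z hNd)
  simp only [Function.comp_apply] at hprod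
  rw [hprod.fderiv]
  simp only [add_apply, smul_apply, smul_eq_mul, rpow_neg_one]
  field_simp
  ring

variable [FiniteDimensional ℝ E] [MeasurableSpace E] [BorelSpace E] (μ : Measure E)
  [μ.IsAddHaarMeasure]

/-- Integrate `∂ᵥ(F φ(‖·‖))` over the whole space: the term containing `φ'` contributes the factor
`∫ φ' = 0`. -/
theorem IsPosHomogeneous.integral_sphere_fderiv_eq_zero [Nontrivial E]
    (hFh : IsPosHomogeneous (1 - Module.finrank ℝ E) F) (hF : ContDiffOn ℝ 1 F {0}ᶜ) (v : E) :
    ∫ x : sphere (0 : E) 1, _root_.fderiv ℝ F x v ∂μ.toSphere = 0 := by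
  let radial : E → ℝ := fun z => F z * (‖z‖ ^ (-1 : ℝ) * _root_.fderiv ℝ norm z v)
  have hradial : ∫ r in Set.Ioi (0 : ℝ), r⁻¹ * (r * deriv annularBump r) = 0 :=
    (setIntegral_congr_fun measurableSet_Ioi fun r (hr : 0 < r) =>
      inv_mul_cancel_left₀ hr.ne' _).trans integral_Ioi_deriv_annularBump
  have hcont := continuousOn_fderiv_apply hF v
  have hrad : ContinuousOn radial {0}ᶜ := hF.continuousOn.mul <|
    (continuous_norm.continuousOn.rpow_const fun z hz => Or.inl (norm_ne_zero_iff.2 hz)).mul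
      (continuousOn_fderiv_apply contDiffOn_norm v)
  have hhom : IsPosHomogeneous (-Module.finrank ℝ E) fun z => _root_.fderiv ℝ F z v := by
    convert hFh.fderiv_apply v using 1
    ring
  have hradh : IsPosHomogeneous (-Module.finrank ℝ E) radial := by
    convert hFh.mul ((isPosHomogeneous_norm.rpow (fun z => norm_pos_iff.2) (-1)).mul
      (isPosHomogeneous_norm.fderiv_apply v)) using 1
    ring
  have hint := isRadialCutoff_annularBump.integrable_mul_comp_norm μ hcont
  have hint' := isRadialCutoff_mul_deriv_annularBump.integrable_mul_comp_norm μ hrad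
  have hsplit : (fun z => _root_.fderiv ℝ (fun w => F w * annularBump ‖w‖) z v) =ᵐ[μ] fun z =>
      _root_.fderiv ℝ F z v * annularBump ‖z‖ + radial z * (‖z‖ * deriv annularBump ‖z‖) := by
    filter_upwards [compl_mem_ae_iff.2 (measure_singleton 0)] with z hz
    exact fderiv_mul_annularBump_norm hF hz v
  have hzero := integral_fderiv_apply_eq_zero μ (v := v)
    (isRadialCutoff_annularBump.integrable_mul_comp_norm μ hF.continuousOn)
    ((hint.add hint').congr hsplit.symm) (differentiable_mul_annularBump_norm hF)
  rw [integral_congr_ae hsplit, integral_add hint hint',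
    hhom.integral_mul_comp_norm_of_isRadialCutoff μ hcont isRadialCutoff_annularBump,
    hradh.integral_mul_comp_norm_of_isRadialCutoff μ hrad isRadialCutoff_mul_deriv_annularBump,
    hradial, mul_zero, add_zero] at hzero
  exact (mul_eq_zero.1 hzero).resolve_right integral_Ioi_inv_mul_annularBump_pos.ne'

theorem integrable_toSphere {G : Type*} [NormedAddCommGroup G] {f : E → G}
    (hf : ContinuousOn f {0}ᶜ) :
    Integrable (fun x : sphere (0 : E) 1 => f x) μ.toSphere :=
  (hf.comp_continuous continuous_subtype_val
    fun x => ne_zero_of_mem_unit_sphere x).integrable_of_hasCompactSupport (.of_compactSpace _)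

theorem IsPosHomogeneous.integral_sphere_fderiv [Nontrivial E]
    (hFh : IsPosHomogeneous α F) (hF : ContDiffOn ℝ 1 F {0}ᶜ) (v : E) :
    ∫ x : sphere (0 : E) 1, _root_.fderiv ℝ F x v ∂μ.toSphere =
      (Module.finrank ℝ E - 1 + α) *
        ∫ x : sphere (0 : E) 1, F x * ⟪(x : E), v⟫_ℝ ∂μ.toSphere := by
  set s : ℝ := Module.finrank ℝ E - 1 + α with hs
  have hnorm : ContDiffOn ℝ 1 (fun z : E => ‖z‖ ^ (-s)) {0}ᶜ :=
    contDiffOn_norm.rpow_const_of_ne fun z hz => norm_ne_zero_iff.2 hz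
  have hhom : IsPosHomogeneous (1 - Module.finrank ℝ E) fun z => F z * ‖z‖ ^ (-s) := by
    convert hFh.mul (isPosHomogeneous_norm.rpow (fun z => norm_pos_iff.2) (-s)) using 1
    rw [hs]
    ring
  have hzero := hhom.integral_sphere_fderiv_eq_zero μ (hF.mul hnorm) v
  rw [← sub_eq_zero, ← integral_const_mul, ← integral_sub, ← hzero]
  · refine integral_congr_ae (.of_forall fun x => ?_)
    have hx := ne_zero_of_mem_unit_sphere x
    beta_reduce
    rw [fderiv_mul_rpow_of_eq_one (differentiableAt_of_contDiffOn_compl_zero hF hx)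
      (differentiableAt_of_contDiffOn_compl_zero contDiffOn_norm hx) (norm_eq_of_mem_sphere x),
      fderiv_norm_apply_sphere]
    ring
  · exact integrable_toSphere μ (continuousOn_fderiv_apply hF v)
  · exact (integrable_toSphere μ (f := fun z => F z * ⟪z, v⟫_ℝ)
      (hF.continuousOn.mul (by fun_prop))).const_mul s

end Divergence

section LinearAlgebra

theorem det_add_smulRight_of_comp_eq_zero {R M : Type*} [CommRing R] [AddCommGroup M] [Module R M]
    [Module.Free R M] [Module.Finite R M] {A : M →ₗ[R] M} {f : M →ₗ[R] R} (hA : f ∘ₗ A = 0)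
    {x : M} (hx : f x = 1) (y : M) :
    LinearMap.det (A + f.smulRight y) = f y * LinearMap.det (A + f.smulRight x) := by
  have hcomp : A + f.smulRight y = LinearMap.transvection f (y - x) ∘ₗ (A + f.smulRight x) := by
    ext v
    have hv : f (A v) = 0 := LinearMap.congr_fun hA v
    simp [LinearMap.transvection.apply, hv, hx, smul_sub]
  rw [hcomp, LinearMap.det_comp, LinearMap.transvection.det, map_sub, hx, add_sub_cancel]

theorem det_pos_of_inner_apply_self_pos {E : Type*} [NormedAddCommGroup E] [InnerProductSpace ℝ E]
    [FiniteDimensional ℝ E] {B : E →L[ℝ] E} (hB : ∀ v ≠ 0, 0 < ⟪B v, v⟫_ℝ) : 0 < B.det := by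
  let path : ℝ → E →L[ℝ] E := fun t => (1 - t) • ContinuousLinearMap.id ℝ E + t • B
  have hcont : Continuous fun t => (path t).det :=
    ContinuousLinearMap.continuous_det.comp (by fun_prop)
  have hpath : ∀ t ∈ Set.Icc (0 : ℝ) 1, (path t).det ≠ 0 := fun t ht hdet => by
    obtain ⟨v, hv, hv0⟩ := Submodule.exists_mem_ne_zero_of_ne_bot
      (LinearMap.bot_lt_ker_of_det_eq_zero hdet).ne'
    have hinner : ⟪path t v, v⟫_ℝ = (1 - t) * ‖v‖ ^ 2 + t * ⟪B v, v⟫_ℝ := by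
      simp [path, inner_add_left, real_inner_smul_left]
    have hzero : path t v = 0 := hv
    rw [hzero, inner_zero_left] at hinner
    have hv2 : 0 < ‖v‖ ^ 2 := by positivity
    have hBv := hB v hv0
    rcases ht.1.eq_or_lt with rfl | ht0
    · linarith
    · nlinarith [mul_nonneg (sub_nonneg.2 ht.2) hv2.le, mul_pos ht0 hBv]
  by_contra! hle
  obtain ⟨t, ht, hzero⟩ := intermediate_value_Icc' zero_le_one hcont.continuousOn
    (show (0 : ℝ) ∈ Set.Icc (path 1).det (path 0).det by
      simp [path, hle, ContinuousLinearMap.det])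
  exact hpath t ht hzero

end LinearAlgebra

theorem gradient_eq_of_eventually_inner_le {E : Type*} [NormedAddCommGroup E]
    [InnerProductSpace ℝ E] [CompleteSpace E] {f : E → ℝ} {y z : E} (hd : DifferentiableAt ℝ f z)
    (hle : ∀ᶠ w in 𝓝 z, ⟪w, y⟫_ℝ ≤ f w) (heq : ⟪z, y⟫_ℝ = f z) : gradient f z = y := by
  have hmin : IsLocalMin (fun w => f w - ⟪y, w⟫_ℝ) z := by
    filter_upwards [hle] with w hw
    rwa [real_inner_comm, heq, sub_self, sub_nonneg, real_inner_comm]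
  rw [gradient, sub_eq_zero.1 (hmin.hasFDerivAt_eq_zero
    (hd.hasFDerivAt.sub (InnerProductSpace.toDual ℝ E y).hasFDerivAt)),
    LinearIsometryEquiv.symm_apply_apply]

section SupportFunction

variable {n : ℕ} {K : Set (Eu n)} {y z : Eu n}

theorem inner_le_sfn (hK : IsCompact K) (hy : y ∈ K) (z : Eu n) : ⟪z, y⟫_ℝ ≤ sfn K z :=
  le_csSup (hK.image (by fun_prop)).bddAbove ⟨y, hy, rfl⟩

theorem exists_inner_eq_sfn (hK : IsCompact K) (hne : K.Nonempty) (z : Eu n) :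
    ∃ y ∈ K, ⟪z, y⟫_ℝ = sfn K z :=
  (hK.image (by fun_prop)).sSup_mem (hne.image _)

theorem isPosHomogeneous_sfn (K : Set (Eu n)) : IsPosHomogeneous 1 (sfn K) := fun z _ r hr => by
  simp only [sfn, sSup_image', rpow_one, smul_eq_mul, real_inner_smul_left,
    Real.mul_iSup_of_nonneg hr.le]

theorem isPosHomogeneous_gradient_sfn (K : Set (Eu n)) :
    IsPosHomogeneous 0 (gradient (sfn K)) := by
  simpa using (isPosHomogeneous_sfn K).gradient

theorem sfn_add_le (hK : IsCompact K) (hne : K.Nonempty) (z w : Eu n) :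
    sfn K (z + w) ≤ sfn K z + sfn K w := by
  obtain ⟨y, hy, hmax⟩ := exists_inner_eq_sfn hK hne (z + w)
  rw [← hmax, inner_add_left]
  exact add_le_add (inner_le_sfn hK hy z) (inner_le_sfn hK hy w)

theorem sfn_image_add_left (hK : IsCompact K) (hne : K.Nonempty) (w : Eu n) :
    sfn ((w + ·) '' K) = fun z => sfn K z + ⟪z, w⟫_ℝ := by
  ext z
  obtain ⟨y, hy, hmax⟩ := exists_inner_eq_sfn hK hne z
  refine IsGreatest.csSup_eq ⟨⟨w + y, ⟨y, hy, rfl⟩, ?_⟩, ?_⟩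
  · simp only [← hmax, inner_add_right, add_comm]
  · rintro _ ⟨_, ⟨u, hu, rfl⟩, rfl⟩
    simpa only [inner_add_right, add_comm ⟪z, w⟫_ℝ] using add_le_add_left (inner_le_sfn hK hu z) _

end SupportFunction

namespace IsSmoothConvexBody

variable {n : ℕ} {K : Set (Eu n)} {z : Eu n}

theorem nonempty (hK : IsSmoothConvexBody K) : K.Nonempty :=
  hK.interior_nonempty.mono interior_subset

theorem contDiffOn_sfn (hK : IsSmoothConvexBody K) : ContDiffOn ℝ 1 (sfn K) {0}ᶜ :=
  hK.smooth.of_le (WithTop.coe_le_coe.2 (le_top (a := (1 : ℕ∞))))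

theorem differentiableAt_sfn (hK : IsSmoothConvexBody K) (hz : z ≠ 0) :
    DifferentiableAt ℝ (sfn K) z :=
  differentiableAt_of_contDiffOn_compl_zero hK.contDiffOn_sfn hz

theorem sfn_pos (hK : IsSmoothConvexBody K) (hz : z ≠ 0) : 0 < sfn K z := by
  obtain ⟨x, hx⟩ := exists_eq_smul_sphere hz
  rw [hx, isPosHomogeneous_sfn K (ne_zero_of_mem_unit_sphere x) (norm_pos_iff.2 hz), rpow_one]
  exact smul_pos (norm_pos_iff.2 hz) (hK.pos x)

theorem gradient_mem (hK : IsSmoothConvexBody K) (hz : z ≠ 0) : gradient (sfn K) z ∈ K := by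
  obtain ⟨y, hy, hmax⟩ := exists_inner_eq_sfn hK.compact hK.nonempty z
  rwa [gradient_eq_of_eventually_inner_le (hK.differentiableAt_sfn hz)
    (.of_forall (inner_le_sfn hK.compact hy)) hmax]

theorem inner_self_gradient (hK : IsSmoothConvexBody K) (hz : z ≠ 0) :
    ⟪z, gradient (sfn K) z⟫_ℝ = sfn K z := by
  rw [real_inner_comm, inner_gradient_left, (isPosHomogeneous_sfn K).fderiv_apply_self hz
    (hK.differentiableAt_sfn hz), one_smul]

theorem inner_gradient_le (hK : IsSmoothConvexBody K) (hz : z ≠ 0) (w : Eu n) :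
    ⟪w, gradient (sfn K) z⟫_ℝ ≤ sfn K w :=
  inner_le_sfn hK.compact (hK.gradient_mem hz) w

theorem contDiffOn_gradient (hK : IsSmoothConvexBody K) :
    ContDiffOn ℝ 1 (gradient (sfn K)) {0}ᶜ := by
  have htwo : (1 + 1 : WithTop ℕ∞) ≤ (⊤ : ℕ∞) := by
    rw [one_add_one_eq_two]
    exact WithTop.coe_le_coe.2 (le_top (a := (2 : ℕ∞)))
  exact (InnerProductSpace.toDual ℝ (Eu n)).symm.toContinuousLinearEquiv.contDiff.comp_contDiffOn
    (hK.smooth.fderiv_of_isOpen isOpen_compl_singleton htwo)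

theorem hasFDerivAt_gradient (hK : IsSmoothConvexBody K) (hz : z ≠ 0) :
    HasFDerivAt (gradient (sfn K)) (hessA K z) z :=
  (differentiableAt_of_contDiffOn_compl_zero hK.contDiffOn_gradient hz).hasFDerivAt

theorem hessA_apply_self (hK : IsSmoothConvexBody K) (hz : z ≠ 0) : hessA K z z = 0 := by
  rw [hessA, (isPosHomogeneous_gradient_sfn K).fderiv_apply_self hz
    (hK.hasFDerivAt_gradient hz).differentiableAt, zero_smul]

theorem inner_hessA_apply (hK : IsSmoothConvexBody K) (hz : z ≠ 0) (v : Eu n) :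
    ⟪z, hessA K z v⟫_ℝ = 0 := by
  have heuler : (fun w => ⟪w, gradient (sfn K) w⟫_ℝ) =ᶠ[𝓝 z] sfn K := by
    filter_upwards [isOpen_ne.mem_nhds hz] with w hw using hK.inner_self_gradient hw
  have hderiv := ((hasFDerivAt_id z).inner ℝ (hK.hasFDerivAt_gradient hz)).unique
    ((hK.differentiableAt_sfn hz).hasFDerivAt.congr_of_eventuallyEq heuler)
  have hv := congrArg (· v) hderiv
  simp only [ContinuousLinearMap.comp_apply, ContinuousLinearMap.prod_apply, fderivInnerCLM_apply,
    ContinuousLinearMap.id_apply, id_eq, ← inner_gradient_left, real_inner_comm v] at hv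
  exact add_eq_right.1 hv

theorem rK_pos (hK : IsSmoothConvexBody K) (x : Sph n) : 0 < rK K x :=
  det_pos_of_inner_apply_self_pos (hK.posdef x)

theorem continuousOn_rK (hK : IsSmoothConvexBody K) : ContinuousOn (rK K) {0}ᶜ := by
  have htens : Continuous fun x : Eu n => tens x :=
    ((innerSL ℝ).contDiff.smulRight contDiff_id).continuous (n := 0)
  exact ContinuousLinearMap.continuous_det.comp_continuousOn <|
    (hK.contDiffOn_gradient.continuousOn_fderiv_of_isOpen isOpen_compl_singleton le_rfl).add
      htens.continuousOn

end IsSmoothConvexBody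

/-- The positively `1`-homogeneous extension of the inverse Gauss map `x ↦ ∇h_K(x)`, which maps the
sphere onto the boundary of `K` and the unit ball onto `K`. -/
def gaussParam {n : ℕ} (K : Set (Eu n)) (z : Eu n) : Eu n := ‖z‖ • gradient (sfn K) z

theorem isPosHomogeneous_gaussParam {n : ℕ} (K : Set (Eu n)) :
    IsPosHomogeneous 1 (gaussParam K) := by
  have h := isPosHomogeneous_norm.smul (isPosHomogeneous_gradient_sfn K)
  rwa [add_zero] at h

theorem isPosHomogeneous_det_fderiv_gaussParam {n : ℕ} (K : Set (Eu n)) :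
    IsPosHomogeneous 0 fun z => (fderiv ℝ (gaussParam K) z).det := fun z hz r hr => by
  have hderiv := (isPosHomogeneous_gaussParam K).fderiv hz hr
  rw [sub_self, rpow_zero, one_smul] at hderiv
  simp only [hderiv, rpow_zero, one_smul]

theorem gaussParam_sphere {n : ℕ} (K : Set (Eu n)) (x : Sph n) :
    gaussParam K x = gradient (sfn K) x := by
  rw [gaussParam, norm_eq_of_mem_sphere x, one_smul]

namespace IsSmoothConvexBody

variable {n : ℕ} {K : Set (Eu n)} {y z w : Eu n}

theorem contDiffOn_gaussParam (hK : IsSmoothConvexBody K) : ContDiffOn ℝ 1 (gaussParam K) {0}ᶜ :=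
  contDiffOn_norm.smul hK.contDiffOn_gradient

theorem fderiv_gaussParam_sphere (hK : IsSmoothConvexBody K) (x : Sph n) :
    fderiv ℝ (gaussParam K) x =
      hessA K x + (innerSL ℝ (x : Eu n)).smulRight (gradient (sfn K) x) := by
  have hx := ne_zero_of_mem_unit_sphere x
  have hnorm : fderiv ℝ norm (x : Eu n) = innerSL ℝ (x : Eu n) :=
    ContinuousLinearMap.ext (fderiv_norm_apply_sphere x)
  have hderiv := (differentiableAt_of_contDiffOn_compl_zero contDiffOn_norm hx).hasFDerivAt.fun_smul
    (hK.hasFDerivAt_gradient hx)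
  rw [hnorm, norm_eq_of_mem_sphere x, one_smul] at hderiv
  exact hderiv.fderiv

theorem det_fderiv_gaussParam_sphere (hK : IsSmoothConvexBody K) (x : Sph n) :
    (fderiv ℝ (gaussParam K) x).det = dens K x := by
  have hx := ne_zero_of_mem_unit_sphere x
  rw [hK.fderiv_gaussParam_sphere, dens, ← hK.inner_self_gradient hx]
  exact det_add_smulRight_of_comp_eq_zero
    (A := (hessA K x : Eu n →ₗ[ℝ] Eu n))
    (f := ((innerSL ℝ (x : Eu n) : Eu n →L[ℝ] ℝ) : Eu n →ₗ[ℝ] ℝ))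
    (LinearMap.ext (hK.inner_hessA_apply hx)) (by simp) (gradient (sfn K) x)

/-- All the points `z + t • w` with `t ≥ 0` lie in the normal cone of `K` at the same boundary
point, so that `∇h_K` is constant along this ray. -/
theorem hessA_apply_eq_zero_of_gradient_eq (hK : IsSmoothConvexBody K) (hz : z ≠ 0) (hw : w ≠ 0)
    (h : gradient (sfn K) z = gradient (sfn K) w) : hessA K z w = 0 := by
  have hline : HasDerivAt (fun t : ℝ => z + t • w) w 0 := by
    simpa using ((hasDerivAt_id (0 : ℝ)).smul_const w).const_add z
  have hcurve : HasDerivWithinAt (fun t : ℝ => gradient (sfn K) (z + t • w)) (hessA K z w)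
      (Set.Ici 0) 0 := by
    have hgrad : HasFDerivAt (gradient (sfn K)) (hessA K z) (z + (0 : ℝ) • w) := by
      simpa using hK.hasFDerivAt_gradient hz
    exact (hgrad.comp_hasDerivAt 0 hline).hasDerivWithinAt
  have hconst : (fun t : ℝ => gradient (sfn K) (z + t • w)) =ᶠ[𝓝[Set.Ici 0] 0]
      fun _ => gradient (sfn K) z := by
    filter_upwards [nhdsWithin_le_nhds (hline.continuousAt.eventually_ne (by simpa using hz)),
      self_mem_nhdsWithin] with t hne ht
    refine gradient_eq_of_eventually_inner_le (hK.differentiableAt_sfn hne)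
      (.of_forall (hK.inner_gradient_le hz)) (le_antisymm (hK.inner_gradient_le hz _) ?_)
    rcases (Set.mem_Ici.1 ht).eq_or_lt with rfl | ht
    · simp [hK.inner_self_gradient hz]
    · have hsmul : sfn K (t • w) = t * sfn K w := by
        rw [isPosHomogeneous_sfn K hw ht, rpow_one, smul_eq_mul]
      rw [inner_add_left, real_inner_smul_left, hK.inner_self_gradient hz, h,
        hK.inner_self_gradient hw, ← hsmul]
      exact sfn_add_le hK.compact hK.nonempty _ _
  exact uniqueDiffOn_Ici (0 : ℝ) 0 Set.self_mem_Ici |>.eq_deriv _ hcurve <|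
    (hasDerivWithinAt_const _ _ _).congr_of_eventuallyEq hconst (by simp)

theorem injective_gradient_sphere (hK : IsSmoothConvexBody K) :
    Function.Injective fun x : Sph n => gradient (sfn K) x := fun x w h => by
  have hx := ne_zero_of_mem_unit_sphere x
  have hw := ne_zero_of_mem_unit_sphere w
  beta_reduce at h
  set a := ⟪(x : Eu n), w⟫_ℝ
  have hker : (hessA K x + tens (x : Eu n)) (w - a • (x : Eu n)) = 0 := by
    simp [hK.hessA_apply_eq_zero_of_gradient_eq hx hw h, hK.hessA_apply_self hx, tens,
      inner_sub_right, inner_smul_right, a]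
  have hpar : (w : Eu n) = a • (x : Eu n) := by
    by_contra hne
    have hpos := hK.posdef x _ (sub_ne_zero.2 hne)
    rw [hker, inner_zero_left] at hpos
    exact hpos.false
  have ha : 0 < a := by
    have hval : sfn K w = a * sfn K x := by
      rw [← hK.inner_self_gradient hw, ← h, hpar, real_inner_smul_left, hK.inner_self_gradient hx]
    exact pos_of_mul_pos_left (hval ▸ hK.pos w) (hK.pos x).le
  have hnorm := congrArg norm hpar
  rw [norm_smul_of_nonneg ha.le, norm_eq_of_mem_sphere, norm_eq_of_mem_sphere, mul_one] at hnorm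
  rw [← hnorm, one_smul] at hpar
  exact Subtype.ext hpar.symm

theorem norm_le_of_gaussParam_eq (hK : IsSmoothConvexBody K) (hz : z ≠ 0) (hw : w ≠ 0)
    (h : gaussParam K z = gaussParam K w) : ‖z‖ ≤ ‖w‖ := by
  have hinner : ‖z‖ * sfn K z = ‖w‖ * ⟪z, gradient (sfn K) w⟫_ℝ := by
    rw [← hK.inner_self_gradient hz, ← real_inner_smul_right, ← real_inner_smul_right]
    exact congrArg (inner ℝ z) h
  exact le_of_mul_le_mul_right (hinner.trans_le
    (mul_le_mul_of_nonneg_left (hK.inner_gradient_le hw z) (norm_nonneg w))) (hK.sfn_pos hz)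

theorem injOn_gaussParam (hK : IsSmoothConvexBody K) : Set.InjOn (gaussParam K) {0}ᶜ := by
  intro z hz w hw h
  have hnorm := (hK.norm_le_of_gaussParam_eq hz hw h).antisymm
    (hK.norm_le_of_gaussParam_eq hw hz h.symm)
  obtain ⟨x, hx⟩ := exists_eq_smul_sphere hz
  obtain ⟨u, hu⟩ := exists_eq_smul_sphere hw
  rw [hx, hu, isPosHomogeneous_gaussParam K (ne_zero_of_mem_unit_sphere x) (norm_pos_iff.2 hz),
    isPosHomogeneous_gaussParam K (ne_zero_of_mem_unit_sphere u) (norm_pos_iff.2 hw), rpow_one,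
    rpow_one, ← hnorm, gaussParam_sphere, gaussParam_sphere] at h
  rw [hx, hu, ← hnorm,
    hK.injective_gradient_sphere (smul_right_injective _ (norm_ne_zero_iff.2 hz) h)]

/-- The direction `x` maximizing `⟪x, y⟫ / h_K(x)` is the outer normal at the boundary point of `K`
on the ray through `y`. -/
theorem exists_gaussParam_eq (hK : IsSmoothConvexBody K) (hy : y ≠ 0) :
    ∃ z ≠ 0, gaussParam K z = y := by
  let ratio : Eu n → ℝ := fun z => ⟪z, y⟫_ℝ / sfn K z
  have hhom : IsPosHomogeneous 0 ratio := fun z hz r hr => by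
    simp only [ratio, real_inner_smul_left, isPosHomogeneous_sfn K hz hr, rpow_one, smul_eq_mul,
      rpow_zero, one_mul, mul_div_mul_left _ _ hr.ne']
  have hcont : ContinuousOn ratio {0}ᶜ :=
    .div (by fun_prop) hK.contDiffOn_sfn.continuousOn fun z hz => (hK.sfn_pos hz).ne'
  obtain ⟨x, hle⟩ := hhom.exists_sphere_forall_le hcont
  have hx := ne_zero_of_mem_unit_sphere x
  have hpos : 0 < ratio x :=
    (div_pos (real_inner_self_pos.2 hy) (hK.sfn_pos hy)).trans_le (hle y hy)
  have hgrad : gradient (sfn K) x = (ratio x)⁻¹ • y := by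
    refine gradient_eq_of_eventually_inner_le (hK.differentiableAt_sfn hx) ?_ ?_
    · filter_upwards [isOpen_ne.mem_nhds hx] with z hz
      rw [real_inner_smul_right, inv_mul_le_iff₀ hpos]
      exact (div_le_iff₀ (hK.sfn_pos hz)).1 (hle z hz)
    · rw [real_inner_smul_right, inv_mul_eq_iff_eq_mul₀ hpos.ne',
        div_mul_cancel₀ _ (hK.sfn_pos hx).ne']
  refine ⟨ratio x • (x : Eu n), smul_ne_zero hpos.ne' hx, ?_⟩
  rw [isPosHomogeneous_gaussParam K hx hpos, rpow_one, gaussParam_sphere, hgrad,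
    smul_inv_smul₀ hpos.ne']

theorem zero_mem (hK : IsSmoothConvexBody K) : 0 ∈ K := by
  by_contra h
  obtain ⟨f, u, hlt, hu⟩ :=
    geometric_hahn_banach_closed_point hK.convex hK.compact.isClosed h
  obtain ⟨w, rfl⟩ := (InnerProductSpace.toDual ℝ (Eu n)).surjective f
  simp only [InnerProductSpace.toDual_apply_apply, inner_zero_right] at hlt hu
  obtain ⟨y, hy, hmax⟩ := exists_inner_eq_sfn hK.compact hK.nonempty w
  have hneg : sfn K w < 0 := hmax ▸ (hlt y hy).trans hu
  have hw : w ≠ 0 := by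
    rintro rfl
    exact ((hlt y hy).trans hu).ne (inner_zero_left y)
  exact hneg.not_gt (hK.sfn_pos hw)

theorem gaussParam_mem_iff (hK : IsSmoothConvexBody K) (hz : z ≠ 0) :
    gaussParam K z ∈ K ↔ ‖z‖ ≤ 1 := by
  refine ⟨fun hmem => ?_, fun hle =>
    hK.convex.smul_mem_of_zero_mem hK.zero_mem (hK.gradient_mem hz) ⟨norm_nonneg z, hle⟩⟩
  have hle := inner_le_sfn hK.compact hmem z
  rw [gaussParam, real_inner_smul_right, hK.inner_self_gradient hz] at hle
  exact (mul_le_iff_le_one_left (hK.sfn_pos hz)).1 hle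

theorem gaussParam_ne_zero (hK : IsSmoothConvexBody K) (hz : z ≠ 0) : gaussParam K z ≠ 0 := by
  refine smul_ne_zero (norm_ne_zero_iff.2 hz) fun h => (hK.sfn_pos hz).ne' ?_
  rw [← hK.inner_self_gradient hz, h, inner_zero_right]

theorem image_gaussParam (hK : IsSmoothConvexBody K) :
    gaussParam K '' (closedBall 0 1 \ {0}) = K \ {0} := by
  ext y
  constructor
  · rintro ⟨z, ⟨hle, hz⟩, rfl⟩
    exact ⟨(hK.gaussParam_mem_iff hz).2 (mem_closedBall_zero_iff.1 hle), hK.gaussParam_ne_zero hz⟩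
  · rintro ⟨hy, hy0⟩
    obtain ⟨z, hz, rfl⟩ := hK.exists_gaussParam_eq hy0
    exact ⟨z, ⟨mem_closedBall_zero_iff.2 ((hK.gaussParam_mem_iff hz).1 hy), hz⟩, rfl⟩

theorem hasFDerivWithinAt_gaussParam (hK : IsSmoothConvexBody K) :
    ∀ z ∈ (closedBall 0 1 \ {0} : Set (Eu n)), HasFDerivWithinAt (gaussParam K)
      (fderiv ℝ (gaussParam K) z) (closedBall 0 1 \ {0}) z := fun _ hz =>
  (differentiableAt_of_contDiffOn_compl_zero hK.contDiffOn_gaussParam hz.2).hasFDerivAt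
    |>.hasFDerivWithinAt

variable {F : Type*} [NormedAddCommGroup F] [NormedSpace ℝ F] {g : Eu n → F}

theorem integrableOn_iff_integrableOn_closedBall (hK : IsSmoothConvexBody K) :
    IntegrableOn g K ↔ IntegrableOn
      (fun z => |(fderiv ℝ (gaussParam K) z).det| • g (gaussParam K z)) (closedBall 0 1) := by
  rw [← integrableOn_congr_set_ae (sdiff_null_ae_eq_self (measure_singleton 0) :
      (closedBall 0 1 \ {0} : Set (Eu n)) =ᵐ[volume] closedBall 0 1),
    ← integrableOn_congr_set_ae (sdiff_null_ae_eq_self (measure_singleton 0) :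
      (K \ {0} : Set (Eu n)) =ᵐ[volume] K), ← hK.image_gaussParam]
  exact integrableOn_image_iff_integrableOn_abs_det_fderiv_smul volume
    (measurableSet_closedBall.diff (measurableSet_singleton 0)) hK.hasFDerivWithinAt_gaussParam
    (hK.injOn_gaussParam.mono fun _ hz => hz.2) g

theorem setIntegral_eq_setIntegral_closedBall (hK : IsSmoothConvexBody K) (g : Eu n → F) :
    ∫ y in K, g y =
      ∫ z in closedBall 0 1, |(fderiv ℝ (gaussParam K) z).det| • g (gaussParam K z) := by
  rw [← setIntegral_congr_set (sdiff_null_ae_eq_self (measure_singleton 0) :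
      (closedBall 0 1 \ {0} : Set (Eu n)) =ᵐ[volume] closedBall 0 1),
    ← setIntegral_congr_set (sdiff_null_ae_eq_self (measure_singleton 0) :
      (K \ {0} : Set (Eu n)) =ᵐ[volume] K), ← hK.image_gaussParam]
  exact integral_image_eq_integral_abs_det_fderiv_smul volume
    (measurableSet_closedBall.diff (measurableSet_singleton 0)) hK.hasFDerivWithinAt_gaussParam
    (hK.injOn_gaussParam.mono fun _ hz => hz.2) g

theorem dens_pos (hK : IsSmoothConvexBody K) (x : Sph n) : 0 < dens K x :=
  mul_pos (hK.pos x) (hK.rK_pos x)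

theorem setIntegral_eq_integral_sphere (hK : IsSmoothConvexBody K) {f : Eu n → ℝ} {β : ℝ}
    (hfh : IsPosHomogeneous β f) (hf : IntegrableOn f K) (hβ : 0 < n + 1 + β) :
    ∫ y in K, f y = (∫ x : Sph n, f (gradient (sfn K) x) * dens K x ∂sphMeas n) / (n + 1 + β) := by
  have hhom : IsPosHomogeneous β fun z =>
      |(fderiv ℝ (gaussParam K) z).det| • f (gaussParam K z) := fun z hz r hr => by
    have hdet := isPosHomogeneous_det_fderiv_gaussParam K hz hr
    rw [rpow_zero, one_smul] at hdet
    simp only [hdet, isPosHomogeneous_gaussParam K hz hr, rpow_one,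
      hfh (hK.gaussParam_ne_zero hz) hr, smul_eq_mul]
    ring
  have hdim : (Module.finrank ℝ (Eu n) : ℝ) = n + 1 := by simp
  rw [hK.setIntegral_eq_setIntegral_closedBall, hhom.setIntegral_closedBall volume
    (by rwa [hdim]) (hK.integrableOn_iff_integrableOn_closedBall.1 hf), hdim]
  congr 1
  refine integral_congr_ae (.of_forall fun x => ?_)
  simp only [hK.det_fderiv_gaussParam_sphere, gaussParam_sphere, smul_eq_mul,
    abs_of_pos (hK.dens_pos x), mul_comm]

end IsSmoothConvexBody

theorem integrable_sphMeas {n : ℕ} {G : Type*} [NormedAddCommGroup G] {f : Eu n → G}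
    (hf : ContinuousOn f {0}ᶜ) :
    Integrable (fun x : Sph n => f x) (sphMeas n) :=
  integrable_toSphere volume hf

theorem IsPosHomogeneous.integral_sphMeas_fderiv {n : ℕ} {F : Eu n → ℝ} {α : ℝ}
    (hFh : IsPosHomogeneous α F) (hF : ContDiffOn ℝ 1 F {0}ᶜ) (v : Eu n) :
    ∫ x : Sph n, _root_.fderiv ℝ F x v ∂sphMeas n =
      (n + α) * ∫ x : Sph n, F x * ⟪(x : Eu n), v⟫_ℝ ∂sphMeas n := by
  have hdiv := hFh.integral_sphere_fderiv volume hF v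
  rwa [finrank_euclideanSpace_fin, Nat.cast_add_one, add_sub_cancel_right] at hdiv

section Translation

variable {n : ℕ} {K : Set (Eu n)} {w z : Eu n}

namespace IsSmoothConvexBody

theorem gradient_sfn_image_add_left (hK : IsSmoothConvexBody K) (w : Eu n) (hz : z ≠ 0) :
    gradient (sfn ((w + ·) '' K)) z = gradient (sfn K) z + w := by
  have hinner : HasGradientAt (fun u => ⟪u, w⟫_ℝ) w z := by
    simp only [real_inner_comm]
    exact (InnerProductSpace.toDual ℝ (Eu n) w).hasFDerivAt
  rw [sfn_image_add_left hK.compact hK.nonempty]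
  refine HasGradientAt.gradient ?_
  rw [hasGradientAt_iff_hasFDerivAt, map_add]
  exact (hK.differentiableAt_sfn hz).hasGradientAt.hasFDerivAt.add hinner.hasFDerivAt

theorem hessA_image_add_left (hK : IsSmoothConvexBody K) (w : Eu n) (hz : z ≠ 0) :
    hessA ((w + ·) '' K) z = hessA K z := by
  have heq : gradient (sfn ((w + ·) '' K)) =ᶠ[𝓝 z] fun u => gradient (sfn K) u + w := by
    filter_upwards [isOpen_ne.mem_nhds hz] with u hu using hK.gradient_sfn_image_add_left w hu
  rw [hessA, heq.fderiv_eq, fderiv_add_const, hessA]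

theorem rK_image_add_left (hK : IsSmoothConvexBody K) (w : Eu n) (x : Sph n) :
    rK ((w + ·) '' K) x = rK K x := by
  rw [rK, hK.hessA_image_add_left w (ne_zero_of_mem_unit_sphere x), rK]

theorem image_add_left (hK : IsSmoothConvexBody K)
    (hw : ∀ x : Sph n, 0 < sfn K x + ⟪(x : Eu n), w⟫_ℝ) :
    IsSmoothConvexBody ((w + ·) '' K) where
  compact := hK.compact.image (by fun_prop)
  convex := hK.convex.translate w
  interior_nonempty := by
    have himage := (Homeomorph.addLeft w).image_interior K
    rw [Homeomorph.coe_addLeft] at himage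
    exact himage ▸ hK.interior_nonempty.image _
  pos x := by
    rw [sfn_image_add_left hK.compact hK.nonempty]
    exact hw x
  smooth := by
    rw [sfn_image_add_left hK.compact hK.nonempty]
    exact hK.smooth.add (contDiff_id.inner ℝ contDiff_const).contDiffOn
  posdef x := by
    rw [hK.hessA_image_add_left w (ne_zero_of_mem_unit_sphere x)]
    exact hK.posdef x

theorem volume_real_eq (hK : IsSmoothConvexBody K) :
    volume.real K = (∫ x : Sph n, dens K x ∂sphMeas n) / (n + 1) := by
  have hone : IsPosHomogeneous 0 fun _ : Eu n => (1 : ℝ) := fun z _ r _ => by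
    rw [rpow_zero, one_smul]
  simpa using hK.setIntegral_eq_integral_sphere hone
    (continuousOn_const.integrableOn_compact hK.compact) (by positivity)

theorem integral_inner_gradient_mul_dens (hK : IsSmoothConvexBody K) (v : Eu n) :
    ∫ x : Sph n, ⟪v, gradient (sfn K) x⟫_ℝ * dens K x ∂sphMeas n =
      (n + 2) * ∫ y in K, ⟪v, y⟫_ℝ := by
  have hbody := hK.setIntegral_eq_integral_sphere (isPosHomogeneous_clm (innerSL ℝ v))
    ((innerSL ℝ v).continuous.continuousOn.integrableOn_compact hK.compact) (by positivity)
  simp only [innerSL_apply_apply] at hbody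
  rw [hbody]
  field_simp
  ring

theorem setIntegral_inner_image_add_left (hK : IsSmoothConvexBody K) (v w : Eu n) :
    ∫ y in (w + ·) '' K, ⟪v, y⟫_ℝ = (∫ y in K, ⟪v, y⟫_ℝ) + ⟪v, w⟫_ℝ * volume.real K := by
  rw [(measurePreserving_add_left volume w).setIntegral_image_emb (measurableEmbedding_addLeft w)]
  simp only [inner_add_right]
  rw [integral_add, setIntegral_const, smul_eq_mul, add_comm, mul_comm]
  · exact continuousOn_const.integrableOn_compact hK.compact
  · exact (Continuous.continuousOn (by fun_prop)).integrableOn_compact hK.compact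

theorem integral_translate (hK : IsSmoothConvexBody K)
    (hw : ∀ x : Sph n, 0 < sfn K x + ⟪(x : Eu n), w⟫_ℝ) (v : Eu n) :
    ∫ x : Sph n, (⟪v, gradient (sfn K) x⟫_ℝ + ⟪v, w⟫_ℝ) *
        ((sfn K x + ⟪(x : Eu n), w⟫_ℝ) * rK K x) ∂sphMeas n =
      (n + 2) * ((∫ y in K, ⟪v, y⟫_ℝ) + ⟪v, w⟫_ℝ * volume.real K) := by
  rw [← hK.setIntegral_inner_image_add_left,
    ← (hK.image_add_left hw).integral_inner_gradient_mul_dens]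
  refine integral_congr_ae (.of_forall fun x => ?_)
  beta_reduce
  rw [hK.gradient_sfn_image_add_left w (ne_zero_of_mem_unit_sphere x), dens,
    hK.rK_image_add_left w x, inner_add_right, sfn_image_add_left hK.compact hK.nonempty]

theorem exists_pos_mul_abs_inner_lt_sfn (hK : IsSmoothConvexBody K) (w : Eu n) :
    ∃ t : ℝ, 0 < t ∧ ∀ x : Sph n, |⟪(x : Eu n), t • w⟫_ℝ| < sfn K x := by
  have hhom : IsPosHomogeneous 0 fun z => |⟪z, w⟫_ℝ| / sfn K z := fun z hz r hr => by
    simp only [real_inner_smul_left, isPosHomogeneous_sfn K hz hr, rpow_one, smul_eq_mul,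
      rpow_zero, one_mul, abs_mul, abs_of_pos hr, mul_div_mul_left _ _ hr.ne']
  obtain ⟨u, hu⟩ := hhom.exists_sphere_forall_le <|
    .div (by fun_prop) hK.contDiffOn_sfn.continuousOn fun z hz => (hK.sfn_pos hz).ne'
  set m := |⟪(u : Eu n), w⟫_ℝ| / sfn K u
  have hm : 0 < m + 1 := by linarith [div_nonneg (abs_nonneg ⟪(u : Eu n), w⟫_ℝ) (hK.pos u).le]
  refine ⟨(m + 1)⁻¹, inv_pos.2 hm, fun x => ?_⟩
  have hx := (div_le_iff₀ (hK.pos x)).1 (hu x (ne_zero_of_mem_unit_sphere x))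
  rw [real_inner_smul_right, abs_mul, abs_of_pos (inv_pos.2 hm), inv_mul_lt_iff₀ hm]
  linarith [hK.pos x]

/-- Compare the first moments of `w + K` and `-w + K`: the terms even in `w` cancel. -/
theorem integral_inner_gradient_mul_inner_mul_rK_of_abs_lt (hK : IsSmoothConvexBody K)
    (hw : ∀ x : Sph n, |⟪(x : Eu n), w⟫_ℝ| < sfn K x) (v : Eu n) :
    ∫ x : Sph n, ⟪v, gradient (sfn K) x⟫_ℝ * ⟪(x : Eu n), w⟫_ℝ * rK K x ∂sphMeas n =
      ⟪v, w⟫_ℝ * volume.real K := by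
  let moment (u : Eu n) (z : Eu n) : ℝ :=
    (⟪v, gradient (sfn K) z⟫_ℝ + ⟪v, u⟫_ℝ) * ((sfn K z + ⟪z, u⟫_ℝ) * rK K z)
  let mixed (z : Eu n) : ℝ := ⟪v, gradient (sfn K) z⟫_ℝ * ⟪z, w⟫_ℝ * rK K z
  have hplus : ∫ x : Sph n, moment w x ∂sphMeas n = _ :=
    hK.integral_translate (fun x => by linarith [(abs_lt.1 (hw x)).1]) v
  have hminus : ∫ x : Sph n, moment (-w) x ∂sphMeas n = _ :=
    hK.integral_translate (fun x => by rw [inner_neg_right]; linarith [(abs_lt.1 (hw x)).2]) v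
  have hsfn := hK.contDiffOn_sfn.continuousOn
  have hrK := hK.continuousOn_rK
  have hgrad : ContinuousOn (fun z => ⟪v, gradient (sfn K) z⟫_ℝ) {0}ᶜ :=
    continuousOn_const.inner hK.contDiffOn_gradient.continuousOn
  have hmoment (u : Eu n) := integrable_sphMeas (f := moment u)
    ((hgrad.add continuousOn_const).mul ((hsfn.add (by fun_prop)).mul hrK))
  have hmixed := integrable_sphMeas (f := mixed) ((hgrad.mul (by fun_prop)).mul hrK)
  have hdens := integrable_sphMeas (f := dens K) (hsfn.mul hrK)
  have hodd : ∀ z, moment w z - moment (-w) z = 2 * mixed z + 2 * ⟪v, w⟫_ℝ * dens K z := fun z => by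
    simp only [moment, mixed, inner_neg_right, dens]
    ring
  have hdiff : (∫ x : Sph n, moment w x ∂sphMeas n) - ∫ x : Sph n, moment (-w) x ∂sphMeas n =
      2 * (∫ x : Sph n, mixed x ∂sphMeas n) +
        2 * ⟪v, w⟫_ℝ * ∫ x : Sph n, dens K x ∂sphMeas n := by
    rw [← integral_const_mul, ← integral_const_mul,
      ← integral_add (hmixed.const_mul _) (hdens.const_mul _),
      ← integral_sub (hmoment w) (hmoment (-w))]
    exact integral_congr_ae (.of_forall fun x => hodd x)
  have hvol := (eq_div_iff (by positivity)).1 hK.volume_real_eq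
  rw [hplus, hminus, inner_neg_right, ← hvol] at hdiff
  linarith

theorem integral_inner_gradient_mul_inner_mul_rK (hK : IsSmoothConvexBody K) (v w : Eu n) :
    ∫ x : Sph n, ⟪v, gradient (sfn K) x⟫_ℝ * ⟪(x : Eu n), w⟫_ℝ * rK K x ∂sphMeas n =
      ⟪v, w⟫_ℝ * volume.real K := by
  obtain ⟨t, ht, hlt⟩ := hK.exists_pos_mul_abs_inner_lt_sfn w
  have hscaled := hK.integral_inner_gradient_mul_inner_mul_rK_of_abs_lt hlt v
  simp only [real_inner_smul_right, mul_left_comm _ t, mul_assoc, integral_const_mul] at hscaled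
  simpa only [mul_assoc] using mul_left_cancel₀ ht.ne' hscaled

end IsSmoothConvexBody

end Translation

section Moments

variable {n : ℕ} {K : Set (Eu n)} {c z : Eu n} {p : ℝ}

namespace IsSmoothConvexBody

theorem contDiffOn_sfn_rpow (hK : IsSmoothConvexBody K) (q : ℝ) :
    ContDiffOn ℝ 1 (fun z => sfn K z ^ q) {0}ᶜ :=
  hK.contDiffOn_sfn.rpow_const_of_ne fun _ hz => (hK.sfn_pos hz).ne'

theorem continuousOn_sfn_rpow (hK : IsSmoothConvexBody K) (q : ℝ) :
    ContinuousOn (fun z => sfn K z ^ q) {0}ᶜ :=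
  (hK.contDiffOn_sfn_rpow q).continuousOn

theorem isPosHomogeneous_sfn_rpow (hK : IsSmoothConvexBody K) (q : ℝ) :
    IsPosHomogeneous q fun z => sfn K z ^ q := by
  simpa using (isPosHomogeneous_sfn K).rpow (fun z => hK.sfn_pos) q

theorem hasFDerivAt_sfn_rpow (hK : IsSmoothConvexBody K) (hz : z ≠ 0) (q : ℝ) :
    HasFDerivAt (fun z => sfn K z ^ q)
      ((q * sfn K z ^ (q - 1)) • innerSL ℝ (gradient (sfn K) z)) z :=
  (hK.differentiableAt_sfn hz).hasGradientAt.hasFDerivAt.rpow_const (Or.inl (hK.sfn_pos hz).ne')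

theorem integral_sfn_rpow_pos (hK : IsSmoothConvexBody K) (q : ℝ) :
    0 < ∫ x : Sph n, sfn K x ^ q ∂sphMeas n := by
  have hpos : ∀ x : Sph n, 0 < sfn K x ^ q := fun x => rpow_pos_of_pos (hK.pos x) q
  have hmeas : sphMeas n ≠ 0 := Measure.toSphere_ne_zero volume
  rw [integral_pos_iff_support_of_nonneg (fun x => (hpos x).le)
    (integrable_sphMeas (hK.continuousOn_sfn_rpow q)),
    Function.support_eq_univ fun x => (hpos x).ne']
  exact Measure.measure_univ_pos.2 hmeas

theorem continuousOn_inner_gradient (hK : IsSmoothConvexBody K) (v : Eu n) :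
    ContinuousOn (fun z => ⟪v, gradient (sfn K) z⟫_ℝ) {0}ᶜ :=
  continuousOn_const.inner hK.contDiffOn_gradient.continuousOn

theorem integral_sfn_rpow_mul_inner_gradient (hK : IsSmoothConvexBody K)
    (hc : c = (∫ x : Sph n, sfn K x ^ p ∂sphMeas n)⁻¹ •
      ∫ x : Sph n, sfn K x ^ p • gradient (sfn K) x ∂sphMeas n) (v : Eu n) :
    ∫ x : Sph n, ⟪v, gradient (sfn K) x⟫_ℝ * sfn K x ^ p ∂sphMeas n =
      ⟪v, c⟫_ℝ * ∫ x : Sph n, sfn K x ^ p ∂sphMeas n := by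
  have hcont : ContinuousOn (fun z => sfn K z ^ p • gradient (sfn K) z) {0}ᶜ :=
    (hK.continuousOn_sfn_rpow p).smul hK.contDiffOn_gradient.continuousOn
  have hint := integral_inner (𝕜 := ℝ) (integrable_sphMeas hcont) v
  simp only [real_inner_smul_right, mul_comm (sfn K _ ^ p)] at hint
  rw [hint, hc, real_inner_smul_right, inv_mul_eq_div,
    div_mul_cancel₀ _ (hK.integral_sfn_rpow_pos p).ne']

theorem integral_inner_gradient_mul_sfn_rpow (hK : IsSmoothConvexBody K) (p : ℝ) (v : Eu n) :
    (p + 1) * ∫ x : Sph n, ⟪v, gradient (sfn K) x⟫_ℝ * sfn K x ^ p ∂sphMeas n =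
      (n + 1 + p) * ∫ x : Sph n, sfn K x ^ (p + 1) * ⟪(x : Eu n), v⟫_ℝ ∂sphMeas n := by
  have hdiv := (hK.isPosHomogeneous_sfn_rpow (p + 1)).integral_sphMeas_fderiv
    (hK.contDiffOn_sfn_rpow (p + 1)) v
  rw [← integral_const_mul, add_right_comm, add_assoc, ← hdiv]
  refine integral_congr_ae (.of_forall fun x => ?_)
  have hderiv := (hK.hasFDerivAt_sfn_rpow (ne_zero_of_mem_unit_sphere x) (p + 1)).fderiv
  simp only [hderiv, add_sub_cancel_right, smul_apply, innerSL_apply_apply,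
    real_inner_comm v, smul_eq_mul]
  ring

theorem integral_sfn_rpow_mul_inner_sq (hK : IsSmoothConvexBody K) (p : ℝ) (v : Eu n) :
    p * (∫ x : Sph n, ⟪v, gradient (sfn K) x⟫_ℝ * ⟪(x : Eu n), v⟫_ℝ *
          sfn K x ^ (p - 1) ∂sphMeas n) + ‖v‖ ^ 2 * ∫ x : Sph n, sfn K x ^ p ∂sphMeas n =
      (n + 1 + p) * ∫ x : Sph n, ⟪(x : Eu n), v⟫_ℝ ^ 2 * sfn K x ^ p ∂sphMeas n := by
  have hhom : IsPosHomogeneous (p + 1) fun z => sfn K z ^ p * innerSL ℝ v z :=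
    (hK.isPosHomogeneous_sfn_rpow p).mul (isPosHomogeneous_clm (innerSL ℝ v))
  have hdiv := hhom.integral_sphMeas_fderiv
    ((hK.contDiffOn_sfn_rpow p).mul (innerSL ℝ v).contDiff.contDiffOn) v
  have hint := integrable_sphMeas
    (f := fun z => ⟪v, gradient (sfn K) z⟫_ℝ * ⟪z, v⟫_ℝ * sfn K z ^ (p - 1))
    (((hK.continuousOn_inner_gradient v).mul (by fun_prop)).mul (hK.continuousOn_sfn_rpow (p - 1)))
  rw [← integral_const_mul, ← integral_const_mul, ← integral_add (hint.const_mul p)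
    ((integrable_sphMeas (hK.continuousOn_sfn_rpow p)).const_mul _), add_right_comm, add_assoc]
  convert hdiv using 4 with x x
  · have hderiv := (hK.hasFDerivAt_sfn_rpow (ne_zero_of_mem_unit_sphere x) p).fun_mul
      (innerSL ℝ v).hasFDerivAt
    rw [hderiv.fderiv]
    simp only [add_apply, smul_apply, innerSL_apply_apply, smul_eq_mul,
      real_inner_comm v, real_inner_self_eq_norm_sq]
    ring
  · rw [innerSL_apply_apply, real_inner_comm]
    ring

theorem dens_eq_sfn_rpow (hK : IsSmoothConvexBody K)
    (heq : ∀ x : Sph n, rK K x = sfn K x ^ (p - 1)) (x : Sph n) : dens K x = sfn K x ^ p := by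
  rw [dens, heq, mul_comm, ← rpow_add_one (hK.pos x).ne', sub_add_cancel]

theorem integral_inner_sq_mul_sfn_rpow (hK : IsSmoothConvexBody K)
    (heq : ∀ x : Sph n, rK K x = sfn K x ^ (p - 1)) (hp : p ≠ -((n : ℝ) + 1)) (v : Eu n) :
    ∫ x : Sph n, ⟪(x : Eu n), v⟫_ℝ ^ 2 * sfn K x ^ p ∂sphMeas n =
      ‖v‖ ^ 2 * (∫ x : Sph n, sfn K x ^ p ∂sphMeas n) / (n + 1) := by
  have hmixed := hK.integral_inner_gradient_mul_inner_mul_rK v v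
  rw [hK.volume_real_eq, real_inner_self_eq_norm_sq] at hmixed
  simp only [heq, hK.dens_eq_sfn_rpow heq] at hmixed
  have hdiv := hK.integral_sfn_rpow_mul_inner_sq p v
  rw [hmixed] at hdiv
  have hp' : (n + 1 + p : ℝ) ≠ 0 := fun h => hp (by linarith)
  refine mul_left_cancel₀ hp' (hdiv.symm.trans ?_)
  field_simp
  ring

theorem integral_norm_gradient_sq_sub_sq_mul_sfn_rpow (hK : IsSmoothConvexBody K) (p : ℝ)
    (c : Eu n) :
    ∫ x : Sph n, (‖gradient (sfn K) x‖ ^ 2 - sfn K x ^ 2) * sfn K x ^ p ∂sphMeas n =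
      (∫ x : Sph n, (‖gradient (sfn K) x - c‖ ^ 2 - (sfn K x - ⟪(x : Eu n), c⟫_ℝ) ^ 2) *
          sfn K x ^ p ∂sphMeas n) +
        (2 * (∫ x : Sph n, ⟪c, gradient (sfn K) x⟫_ℝ * sfn K x ^ p ∂sphMeas n) -
          ‖c‖ ^ 2 * (∫ x : Sph n, sfn K x ^ p ∂sphMeas n) -
          2 * (∫ x : Sph n, sfn K x ^ (p + 1) * ⟪(x : Eu n), c⟫_ℝ ∂sphMeas n) +
          ∫ x : Sph n, ⟪(x : Eu n), c⟫_ℝ ^ 2 * sfn K x ^ p ∂sphMeas n) := by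
  have hsfn := hK.contDiffOn_sfn.continuousOn
  have hgrad := hK.contDiffOn_gradient.continuousOn
  have hpow := hK.continuousOn_sfn_rpow p
  have hinner : ContinuousOn (fun z : Eu n => ⟪z, c⟫_ℝ) {0}ᶜ := by fun_prop
  have htranslated := integrable_sphMeas <|
    (((hgrad.fun_sub (continuousOn_const (c := c))).norm.fun_pow 2).fun_sub
      ((hsfn.fun_sub hinner).fun_pow 2)).fun_mul hpow
  have hfirst := (integrable_sphMeas <|
    (hK.continuousOn_inner_gradient c).fun_mul hpow).const_mul 2
  have hmass := (integrable_sphMeas hpow).const_mul (‖c‖ ^ 2)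
  have hcross := (integrable_sphMeas <|
    (hK.continuousOn_sfn_rpow (p + 1)).fun_mul hinner).const_mul 2
  have hsq := integrable_sphMeas <| (hinner.fun_pow 2).fun_mul hpow
  simp only [← integral_const_mul]
  have hsub := (hfirst.sub hmass).sub hcross
  rw [← integral_sub' hfirst hmass, ← integral_sub' (hfirst.sub hmass) hcross,
    ← integral_add' hsub hsq, ← integral_add' htranslated (hsub.add hsq)]
  refine integral_congr_ae (.of_forall fun x => ?_)
  simp only [Pi.add_apply, Pi.sub_apply, norm_sub_sq_real, real_inner_comm c,
    rpow_add_one (hK.pos x).ne']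
  ring

end IsSmoothConvexBody

end Moments

theorem gradient_splitting_general (n : ℕ) (p : ℝ) (hp : p ≠ -((n : ℝ) + 1))
    (K : Set (Eu n)) (hK : IsSmoothConvexBody K)
    (heq : ∀ x : Sph n, rK K (x : Eu n) = sfn K (x : Eu n) ^ (p - 1))
    (c : Eu n)
    (hc : c = (∫ x : Sph n, sfn K (x : Eu n) ^ p ∂sphMeas n)⁻¹ •
        ∫ x : Sph n, sfn K (x : Eu n) ^ p • gradient (sfn K) (x : Eu n) ∂sphMeas n) :
    ∫ x : Sph n, (‖gradient (sfn K) (x : Eu n)‖ ^ 2 - sfn K (x : Eu n) ^ 2) *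
        sfn K (x : Eu n) ^ p ∂sphMeas n =
      (∫ x : Sph n, (‖gradient (sfn K) (x : Eu n) - c‖ ^ 2 -
          (sfn K (x : Eu n) - ⟪(x : Eu n), c⟫_ℝ) ^ 2) * sfn K (x : Eu n) ^ p ∂sphMeas n) +
        (n : ℝ) * ((n : ℝ) + 1 - p) * ‖c‖ ^ 2 / (((n : ℝ) + 1) * ((n : ℝ) + 1 + p)) *
          ∫ x : Sph n, sfn K (x : Eu n) ^ p ∂sphMeas n := by
  have hp' : (n + 1 + p : ℝ) ≠ 0 := fun h => hp (by linarith)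
  have hfirst := hK.integral_sfn_rpow_mul_inner_gradient hc c
  rw [real_inner_self_eq_norm_sq] at hfirst
  have hcross := hK.integral_inner_gradient_mul_sfn_rpow p c
  rw [hfirst, mul_comm (n + 1 + p : ℝ), ← div_eq_iff hp'] at hcross
  rw [hK.integral_norm_gradient_sq_sub_sq_mul_sfn_rpow p c, hfirst, ← hcross,
    hK.integral_inner_sq_mul_sfn_rpow heq hp c]
  congr 1
  field_simp
  ring

/-- If `dV = h^p dθ` with `p > −n−1`, then
`∫ |∇̄h|² dV = ∫ |∇̄h̃|² dV + n(n+1−p)|c|²/((n+1)(n+1+p)) ∫ dV`,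
where `|∇̄h|² = |∇h_K|² − h²` and `|∇̄h̃|² = |∇h_K − c|² − h̃²` on `S^n`. -/
theorem gradient_splitting (n : ℕ) (hn : 1 ≤ n) (p : ℝ) (hp : -((n : ℝ) + 1) < p)
    (K : Set (Eu n)) (hK : IsSmoothConvexBody K)
    (heq : ∀ x : Sph n, rK K (x : Eu n) = sfn K (x : Eu n) ^ (p - 1))
    (c : Eu n)
    (hc : c = (∫ x : Sph n, sfn K (x : Eu n) ^ p ∂sphMeas n)⁻¹ •
        ∫ x : Sph n, sfn K (x : Eu n) ^ p • gradient (sfn K) (x : Eu n) ∂sphMeas n) :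
    ∫ x : Sph n, (‖gradient (sfn K) (x : Eu n)‖ ^ 2 - sfn K (x : Eu n) ^ 2) *
        sfn K (x : Eu n) ^ p ∂sphMeas n =
      (∫ x : Sph n, (‖gradient (sfn K) (x : Eu n) - c‖ ^ 2 -
          (sfn K (x : Eu n) - ⟪(x : Eu n), c⟫_ℝ) ^ 2) * sfn K (x : Eu n) ^ p ∂sphMeas n) +
        (n : ℝ) * ((n : ℝ) + 1 - p) * ‖c‖ ^ 2 / (((n : ℝ) + 1) * ((n : ℝ) + 1 + p)) *
          ∫ x : Sph n, sfn K (x : Eu n) ^ p ∂sphMeas n := by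
  exact gradient_splitting_general n p hp.ne' K hK heq c hc
end
end

section
/- Let n ≥ 1, let p be a real number with p ≠ −(n+1), and let H : ℝ^{n+1}\{0} → ℝ be a C^∞, positively 1-homogeneous function that is positive on the unit sphere S^n. Then ∫_{S^n} x·H(x)^{p+1} dθ(x) = ((p+1)/(n+p+1))·∫_{S^n} ∇H(x)·H(x)^p dθ(x), as an identity of vectors in ℝ^{n+1} (where ∇H is the Euclidean gradient). -/
open MeasureTheory Metric Real
open scoped InnerProductSpace ENNReal Topology

noncomputable section

/-!
Let `G` be positively homogeneous of degree `d` on an `N`-dimensional space and let `φ` be a bump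
function supported in `(0, ∞)`. Integration by parts moves a derivative `∂_v` between `φ(‖x‖)` and
`G x`; with `x = r u` in polar coordinates this reads
`(∫ φ r^{N+d-2} dr) ∫ ∂_v G dθ = -(∫ φ' r^{N+d-1} dr) ∫ ⟪u, v⟫ G dθ`.
A one-dimensional integration by parts shows that the second radial factor is `-(N+d-1)` times the
first, and the first is positive, so `∫ ∇G dθ = (N+d-1) ∫ G u dθ`. For `H` homogeneous of degree `1`
apply this to `G = H^{p+1}`, which has degree `p + 1` and gradient `(p+1) H^p ∇H`.
-/

open Set Module
open scoped Gradient

section PosHomogeneous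

variable {E F : Type*} [NormedAddCommGroup E] [NormedAddCommGroup F] [NormedSpace ℝ F]

/-- `G` is positively homogeneous of real degree `d` on `E \ {0}`. Its value at `0` is left
unconstrained. -/
def PosHomogeneous [NormedSpace ℝ E] (d : ℝ) (G : E → F) : Prop :=
  ∀ z, z ≠ 0 → ∀ t : ℝ, 0 < t → G (t • z) = t ^ d • G z

variable {d : ℝ} {G : E → F} {H : E → ℝ}

theorem PosHomogeneous.pos_of_pos_on_sphere [NormedSpace ℝ E] (hH : PosHomogeneous d H)
    (hpos : ∀ u : sphere (0 : E) 1, 0 < H u) {x : E} (hx : x ≠ 0) : 0 < H x := by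
  have hnorm : 0 < ‖x‖ := norm_pos_iff.2 hx
  have h : 0 < H (‖x‖⁻¹ • x) := hpos ⟨‖x‖⁻¹ • x, by simp [norm_smul, hx]⟩
  rw [hH x hx _ (inv_pos.2 hnorm)] at h
  exact pos_of_mul_pos_right h (by positivity)

theorem PosHomogeneous.rpow_const [NormedSpace ℝ E] (hH : PosHomogeneous d H)
    (hnonneg : ∀ x, x ≠ 0 → 0 ≤ H x) (q : ℝ) : PosHomogeneous (d * q) fun x ↦ H x ^ q := by
  intro z hz t ht
  simp only [hH z hz t ht, smul_eq_mul]
  rw [Real.mul_rpow (by positivity) (hnonneg z hz), Real.rpow_mul ht.le]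

theorem PosHomogeneous.fderiv_apply [NormedSpace ℝ E] (hG : PosHomogeneous d G) (v : E) :
    PosHomogeneous (d - 1) fun x ↦ fderiv ℝ G x v := by
  intro z hz t ht
  have hscale : (fun x ↦ G (t • x)) =ᶠ[𝓝 z] t ^ d • G := by
    filter_upwards [isOpen_compl_singleton.mem_nhds hz] with x hx using hG x hx t ht
  have hderiv : t • fderiv ℝ G (t • z) = t ^ d • fderiv ℝ G z := by
    rw [← fderiv_comp_smul, hscale.fderiv_eq, fderiv_const_smul_field, Pi.smul_apply]
  rw [Real.rpow_sub_one ht.ne', div_eq_inv_mul, mul_smul, eq_inv_smul_iff₀ ht.ne']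
  exact DFunLike.congr_fun hderiv v

theorem PosHomogeneous.inner_smul [InnerProductSpace ℝ E] (hG : PosHomogeneous d G) (v : E) :
    PosHomogeneous (d + 1) fun x ↦ ⟪x, v⟫_ℝ • G x := by
  intro z hz t ht
  simp only [hG z hz t ht, real_inner_smul_left, smul_smul, Real.rpow_add_one ht.ne']
  congr 1
  ring

end PosHomogeneous

section PolarCoordinates

variable {E F : Type*} [NormedAddCommGroup E] [NormedSpace ℝ E] [FiniteDimensional ℝ E]
  [Nontrivial E] [MeasurableSpace E] [BorelSpace E] (μ : Measure E) [μ.IsAddHaarMeasure]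
  [NormedAddCommGroup F] [NormedSpace ℝ F]

theorem integral_volumeIoiPow (n : ℕ) (f : ℝ → F) :
    ∫ r : Ioi (0 : ℝ), f r ∂.volumeIoiPow n = ∫ r in Ioi (0 : ℝ), r ^ n • f r := by
  simp only [Measure.volumeIoiPow, ENNReal.ofReal]
  rw [integral_withDensity_eq_integral_smul (measurable_subtype_coe.pow_const _).real_toNNReal,
    integral_subtype_comap measurableSet_Ioi fun r ↦ Real.toNNReal (r ^ n) • f r]
  refine setIntegral_congr_fun measurableSet_Ioi fun r hr ↦ ?_
  rw [NNReal.smul_def, Real.coe_toNNReal _ (pow_nonneg hr.out.le _)]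

theorem integral_toSphere_prod_volumeIoiPow (g : E → F) :
    ∫ z, g ((z.2 : ℝ) • (z.1 : E)) ∂μ.toSphere.prod (.volumeIoiPow (finrank ℝ E - 1)) =
      ∫ x, g x ∂μ := by
  calc ∫ z, g ((z.2 : ℝ) • (z.1 : E)) ∂μ.toSphere.prod (.volumeIoiPow (finrank ℝ E - 1))
    _ = ∫ x : ({0}ᶜ : Set E), g x ∂μ.comap (↑) := by
      rw [← μ.measurePreserving_homeomorphUnitSphereProd.integral_comp
        (Homeomorph.measurableEmbedding _)]
      refine integral_congr_ae (.of_forall fun x ↦ ?_)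
      simp [smul_inv_smul₀ (norm_ne_zero_iff.2 x.2)]
    _ = ∫ x, g x ∂μ := by
      rw [integral_subtype_comap (measurableSet_singleton _).compl, restrict_compl_singleton]

theorem PosHomogeneous.integral_norm_smul {d : ℝ} {G : E → F} (hG : PosHomogeneous d G)
    (f : ℝ → ℝ) :
    ∫ x, f ‖x‖ • G x ∂μ =
      (∫ r in Ioi (0 : ℝ), f r * r ^ (finrank ℝ E + d - 1)) • ∫ u, G u ∂μ.toSphere := by
  have hpow {r : ℝ} (hr : 0 < r) :
      r ^ (finrank ℝ E - 1) * (f r * r ^ d) = f r * r ^ (finrank ℝ E + d - 1) := by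
    rw [add_sub_right_comm, Real.rpow_add hr, ← Nat.cast_pred finrank_pos, Real.rpow_natCast]
    ring
  calc ∫ x, f ‖x‖ • G x ∂μ
    _ = ∫ z, (f z.2 * (z.2 : ℝ) ^ d) • G z.1
          ∂μ.toSphere.prod (.volumeIoiPow (finrank ℝ E - 1)) := by
      rw [← integral_toSphere_prod_volumeIoiPow]
      refine integral_congr_ae (.of_forall fun ⟨u, r⟩ ↦ ?_)
      have hr : 0 < (r : ℝ) := r.2
      simp [norm_smul, abs_of_pos hr, hG u (ne_zero_of_mem_unit_sphere u) r hr, mul_smul]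
    _ = (∫ r : Ioi (0 : ℝ), f r * (r : ℝ) ^ d ∂.volumeIoiPow (finrank ℝ E - 1)) •
          ∫ u, G u ∂μ.toSphere := by
      rw [← integral_prod_swap]
      exact integral_prod_smul (fun r : Ioi (0 : ℝ) ↦ f r * (r : ℝ) ^ d)
        fun u : sphere (0 : E) 1 ↦ G u
    _ = (∫ r in Ioi (0 : ℝ), f r * r ^ (finrank ℝ E + d - 1)) • ∫ u, G u ∂μ.toSphere := by
      rw [integral_volumeIoiPow _ fun r ↦ f r * r ^ d]
      congr 1
      exact setIntegral_congr_fun measurableSet_Ioi fun r hr ↦ hpow hr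

end PolarCoordinates

section Cutoff

theorem continuous_smul_of_tsupport_subset {X F : Type*} [TopologicalSpace X]
    [NormedAddCommGroup F] [NormedSpace ℝ F] {f : X → ℝ} {K : X → F} {U : Set X}
    (hf : Continuous f) (hU : IsOpen U) (hfU : tsupport f ⊆ U) (hK : ContinuousOn K U) :
    Continuous fun x ↦ f x • K x :=
  (hf.continuousOn.smul hK).continuous_of_tsupport_subset hU
    ((tsupport_smul_subset_left f K).trans hfU)

theorem integrable_smul_of_tsupport_subset {X F : Type*} [TopologicalSpace X] [MeasurableSpace X]
    [OpensMeasurableSpace X] {μ : Measure X} [IsFiniteMeasureOnCompacts μ]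
    [NormedAddCommGroup F] [NormedSpace ℝ F] {f : X → ℝ} {K : X → F} {U : Set X}
    (hf : Continuous f) (hfc : HasCompactSupport f) (hU : IsOpen U) (hfU : tsupport f ⊆ U)
    (hK : ContinuousOn K U) : Integrable (fun x ↦ f x • K x) μ :=
  (continuous_smul_of_tsupport_subset hf hU hfU hK).integrable_of_hasCompactSupport hfc.smul_right

theorem setIntegral_mul_eq_integral_of_support_subset {X : Type*} [MeasurableSpace X]
    {μ : Measure X} {f : X → ℝ} {s : Set X} (hf : Function.support f ⊆ s) (k : X → ℝ) :
    ∫ x in s, f x * k x ∂μ = ∫ x, f x * k x ∂μ :=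
  setIntegral_eq_integral_of_forall_compl_eq_zero fun x hx ↦ by
    rw [Function.notMem_support.1 fun h ↦ hx (hf h), zero_mul]

variable {φ : ℝ → ℝ}

theorem continuousOn_rpow_const_Ioi (s : ℝ) : ContinuousOn (fun r : ℝ ↦ r ^ s) (Ioi 0) :=
  continuousOn_id.rpow_const fun _ hr ↦ Or.inl hr.out.ne'

theorem integral_Ioi_deriv_mul_rpow (hφ : ContDiff ℝ 1 φ) (hφc : HasCompactSupport φ)
    (hφ0 : tsupport φ ⊆ Ioi 0) (s : ℝ) :
    ∫ r in Ioi (0 : ℝ), deriv φ r * r ^ s = -(s * ∫ r in Ioi (0 : ℝ), φ r * r ^ (s - 1)) := by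
  have hφ0' : tsupport (deriv φ) ⊆ Ioi 0 := tsupport_deriv_subset.trans hφ0
  have hφ' : Continuous (deriv φ) := hφ.continuous_deriv le_rfl
  have hparts : ∫ r, φ r * (s * r ^ (s - 1)) = -∫ r, deriv φ r * r ^ s :=
    integral_mul_deriv_eq_deriv_mul_of_integrable
      (fun r _ ↦ (hφ.differentiable one_ne_zero r).hasDerivAt)
      (fun r hr ↦ Real.hasDerivAt_rpow_const (Or.inl (hφ0 hr).ne'))
      (integrable_smul_of_tsupport_subset hφ.continuous hφc isOpen_Ioi hφ0
        (continuousOn_const.mul (continuousOn_rpow_const_Ioi _)))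
      (integrable_smul_of_tsupport_subset hφ' hφc.deriv isOpen_Ioi hφ0'
        (continuousOn_rpow_const_Ioi _))
      (integrable_smul_of_tsupport_subset hφ.continuous hφc isOpen_Ioi hφ0
        (continuousOn_rpow_const_Ioi _))
  rw [setIntegral_mul_eq_integral_of_support_subset ((subset_tsupport _).trans hφ0'),
    setIntegral_mul_eq_integral_of_support_subset ((subset_tsupport _).trans hφ0),
    ← integral_const_mul, eq_neg_iff_add_eq_zero, ← eq_neg_iff_add_eq_zero.1 hparts, add_comm]
  simp only [mul_left_comm]

theorem integral_Ioi_mul_rpow_pos (hφ : Continuous φ) (hφc : HasCompactSupport φ)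
    (hφ0 : tsupport φ ⊆ Ioi 0) (hφ_nonneg : ∀ r, 0 ≤ φ r) {r₀ : ℝ} (hr₀ : φ r₀ ≠ 0) (s : ℝ) :
    0 < ∫ r in Ioi (0 : ℝ), φ r * r ^ s := by
  have hr₀_pos : 0 < r₀ := hφ0 (subset_tsupport φ hr₀)
  rw [setIntegral_mul_eq_integral_of_support_subset ((subset_tsupport _).trans hφ0)]
  refine (continuous_smul_of_tsupport_subset hφ isOpen_Ioi hφ0
    (continuousOn_rpow_const_Ioi s)).integral_pos_of_hasCompactSupport_nonneg_nonzero
    (x := r₀) hφc.smul_right (fun r ↦ ?_)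
    (smul_ne_zero hr₀ (Real.rpow_pos_of_pos hr₀_pos s).ne')
  by_cases hr : r ∈ tsupport φ
  · exact mul_nonneg (hφ_nonneg r) (Real.rpow_nonneg (hφ0 hr).out.le s)
  · simp [image_eq_zero_of_notMem_tsupport hr]

theorem tsupport_comp_norm_subset {E : Type*} [NormedAddCommGroup E] (hφ : tsupport φ ⊆ Ioi 0) :
    tsupport (fun x : E ↦ φ ‖x‖) ⊆ {0}ᶜ :=
  (tsupport_comp_subset_preimage φ continuous_norm).trans fun _ hx ↦ norm_pos_iff.1 (hφ hx)

theorem hasCompactSupport_comp_norm {E : Type*} [NormedAddCommGroup E] [ProperSpace E]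
    (hφ : HasCompactSupport φ) : HasCompactSupport fun x : E ↦ φ ‖x‖ := by
  obtain ⟨R, hR⟩ := hφ.isCompact.isBounded.subset_closedBall 0
  refine HasCompactSupport.of_support_subset_isCompact (isCompact_closedBall 0 R) fun x hx ↦ ?_
  simpa using hR (subset_tsupport φ hx)

variable {E : Type*} [NormedAddCommGroup E] [InnerProductSpace ℝ E]

theorem contDiff_comp_norm_of_tsupport_subset {n : WithTop ℕ∞} (hφ : ContDiff ℝ n φ)
    (hφ0 : tsupport φ ⊆ Ioi 0) : ContDiff ℝ n fun x : E ↦ φ ‖x‖ :=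
  (contMDiff_of_tsupport fun _ hx ↦
    (hφ.contDiffAt.comp _
      (contDiffAt_norm ℝ (tsupport_comp_norm_subset hφ0 hx))).contMDiffAt).contDiff

theorem hasFDerivAt_norm {x : E} (hx : x ≠ 0) :
    HasFDerivAt (‖·‖) (‖x‖⁻¹ • innerSL ℝ x) x := by
  have hsqrt := (hasStrictFDerivAt_norm_sq x).hasFDerivAt.sqrt
    (pow_ne_zero 2 (norm_ne_zero_iff.2 hx))
  simpa [Real.sqrt_sq, ← Nat.cast_smul_eq_nsmul ℝ, smul_smul] using hsqrt

theorem fderiv_comp_norm_apply {x : E} (hφ : DifferentiableAt ℝ φ ‖x‖) (hx : x ≠ 0) (v : E) :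
    fderiv ℝ (fun x : E ↦ φ ‖x‖) x v = deriv φ ‖x‖ * ‖x‖⁻¹ * ⟪x, v⟫_ℝ := by
  have hcomp : HasFDerivAt (fun x : E ↦ φ ‖x‖) (deriv φ ‖x‖ • ‖x‖⁻¹ • innerSL ℝ x) x :=
    hφ.hasDerivAt.comp_hasFDerivAt x (hasFDerivAt_norm hx)
  simp [hcomp.fderiv, mul_assoc]

end Cutoff

section Sphere

variable {E F : Type*} [NormedAddCommGroup E] [InnerProductSpace ℝ E] [FiniteDimensional ℝ E]
  [MeasurableSpace E] [BorelSpace E] (μ : Measure E) [μ.IsAddHaarMeasure]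
  [NormedAddCommGroup F] [NormedSpace ℝ F] {d : ℝ} {G : E → F} {φ : ℝ → ℝ}

theorem integral_comp_norm_smul_fderiv (hφ : ContDiff ℝ 1 φ) (hφc : HasCompactSupport φ)
    (hφ0 : tsupport φ ⊆ Ioi 0) (hG : ContDiffOn ℝ 1 G {0}ᶜ) (v : E) :
    ∫ x, φ ‖x‖ • fderiv ℝ G x v ∂μ = -∫ x, fderiv ℝ (fun x ↦ φ ‖x‖) x v • G x ∂μ := by
  have hψ : ContDiff ℝ 1 fun x : E ↦ φ ‖x‖ := contDiff_comp_norm_of_tsupport_subset hφ hφ0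
  have hψc : HasCompactSupport fun x : E ↦ φ ‖x‖ := hasCompactSupport_comp_norm hφc
  have hψ0 : tsupport (fun x : E ↦ φ ‖x‖) ⊆ {0}ᶜ := tsupport_comp_norm_subset hφ0
  have hG' : ContinuousOn (fun x ↦ fderiv ℝ G x v) {0}ᶜ :=
    (hG.continuousOn_fderiv_of_isOpen isOpen_compl_singleton le_rfl).clm_apply continuousOn_const
  refine integral_smul_fderiv_eq_neg_fderiv_smul_of_integrable ?_ ?_ ?_
    (fun x _ ↦ hψ.differentiable one_ne_zero x)
    (fun x hx ↦ (hG.differentiableOn one_ne_zero).differentiableAt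
      (isOpen_compl_singleton.mem_nhds (hψ0 hx)))
  · exact integrable_smul_of_tsupport_subset
      ((hψ.continuous_fderiv one_ne_zero).clm_apply continuous_const) (hψc.fderiv_apply ℝ v)
      isOpen_compl_singleton ((tsupport_fderiv_apply_subset ℝ v).trans hψ0) hG.continuousOn
  · exact integrable_smul_of_tsupport_subset hψ.continuous hψc isOpen_compl_singleton hψ0 hG'
  · exact integrable_smul_of_tsupport_subset hψ.continuous hψc isOpen_compl_singleton hψ0
      hG.continuousOn

variable [Nontrivial E]

theorem PosHomogeneous.integral_fderiv_comp_norm_smul (hG : PosHomogeneous d G)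
    (hφ : Differentiable ℝ φ) (v : E) :
    ∫ x, fderiv ℝ (fun x ↦ φ ‖x‖) x v • G x ∂μ =
      (∫ r in Ioi (0 : ℝ), deriv φ r * r ^ (finrank ℝ E + d - 1)) •
        ∫ u : sphere (0 : E) 1, ⟪(u : E), v⟫_ℝ • G u ∂μ.toSphere := by
  have hpow : ∀ r ∈ Ioi (0 : ℝ), deriv φ r * r⁻¹ * r ^ (finrank ℝ E + (d + 1) - 1) =
      deriv φ r * r ^ (finrank ℝ E + d - 1) := fun r hr ↦ by
    rw [← add_assoc, add_sub_right_comm, Real.rpow_add_one hr.out.ne']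
    field_simp [hr.out.ne']
  calc ∫ x, fderiv ℝ (fun x ↦ φ ‖x‖) x v • G x ∂μ
    _ = ∫ x, (deriv φ ‖x‖ * ‖x‖⁻¹) • ⟪x, v⟫_ℝ • G x ∂μ := by
      refine integral_congr_ae ?_
      filter_upwards [compl_mem_ae_iff.2 (measure_singleton (μ := μ) 0)] with x hx
      rw [fderiv_comp_norm_apply (hφ _) hx, mul_smul]
    _ = _ := by
      rw [(hG.inner_smul v).integral_norm_smul μ fun r ↦ deriv φ r * r⁻¹,
        setIntegral_congr_fun measurableSet_Ioi hpow]

theorem PosHomogeneous.integral_toSphere_fderiv_apply (hG : PosHomogeneous d G)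
    (hGs : ContDiffOn ℝ 1 G {0}ᶜ) (v : E) :
    ∫ u : sphere (0 : E) 1, fderiv ℝ G u v ∂μ.toSphere =
      (finrank ℝ E + d - 1) • ∫ u : sphere (0 : E) 1, ⟪(u : E), v⟫_ℝ • G u ∂μ.toSphere := by
  obtain ⟨φ, hφ0, hφc, hφ, hφ_range, hφ_one⟩ :=
    exists_contDiff_tsupport_subset (n := 1) (Ioi_mem_nhds (one_pos : (0 : ℝ) < 1))
  set c := ∫ r in Ioi (0 : ℝ), φ r * r ^ (finrank ℝ E + d - 1 - 1)
  have hc : 0 < c := integral_Ioi_mul_rpow_pos hφ.continuous hφc hφ0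
    (fun r ↦ (hφ_range (mem_range_self r)).1) (r₀ := 1) (by simp [hφ_one]) _
  have hparts := integral_comp_norm_smul_fderiv μ hφ hφc hφ0 hGs v
  rw [(hG.fderiv_apply v).integral_norm_smul μ,
    hG.integral_fderiv_comp_norm_smul μ (hφ.differentiable one_ne_zero),
    integral_Ioi_deriv_mul_rpow hφ hφc hφ0, ← add_sub_assoc, neg_smul, neg_neg, mul_comm,
    mul_smul] at hparts
  exact smul_right_injective F hc.ne' hparts

theorem PosHomogeneous.integral_toSphere_gradient {H : E → ℝ} (hH : PosHomogeneous d H)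
    (hHs : ContDiffOn ℝ 1 H {0}ᶜ) :
    ∫ u : sphere (0 : E) 1, ∇ H u ∂μ.toSphere =
      (finrank ℝ E + d - 1) • ∫ u : sphere (0 : E) 1, H u • (u : E) ∂μ.toSphere := by
  have hne (u : sphere (0 : E) 1) : (u : E) ∈ ({0}ᶜ : Set E) := ne_zero_of_mem_unit_sphere u
  have hint {V : sphere (0 : E) 1 → E} (hV : Continuous V) : Integrable V μ.toSphere :=
    hV.integrable_of_hasCompactSupport (.of_compactSpace V)
  have hgrad : Continuous fun u : sphere (0 : E) 1 ↦ ∇ H (u : E) :=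
    (InnerProductSpace.toDual ℝ E).symm.continuous.comp
      ((hHs.continuousOn_fderiv_of_isOpen isOpen_compl_singleton le_rfl).comp_continuous
        continuous_subtype_val hne)
  have hmom : Continuous fun u : sphere (0 : E) 1 ↦ H u • (u : E) :=
    (hHs.continuousOn.comp_continuous continuous_subtype_val hne).smul continuous_subtype_val
  refine ext_inner_left ℝ fun v ↦ ?_
  rw [real_inner_smul_right, ← integral_inner (hint hgrad), ← integral_inner (hint hmom)]
  simpa only [real_inner_smul_left, real_inner_smul_right, real_inner_comm _ v,
    inner_gradient_left, smul_eq_mul, mul_comm] using hH.integral_toSphere_fderiv_apply μ hHs v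

end Sphere

theorem gradient_rpow_const {E : Type*} [NormedAddCommGroup E] [InnerProductSpace ℝ E]
    [CompleteSpace E] {H : E → ℝ} {x : E} {q : ℝ} (hH : DifferentiableAt ℝ H x)
    (hx : H x ≠ 0 ∨ 1 ≤ q) : ∇ (fun y ↦ H y ^ q) x = (q * H x ^ (q - 1)) • ∇ H x := by
  rw [gradient, (hH.hasFDerivAt.rpow_const hx).fderiv, map_smul, gradient]

theorem moment_identity_general {E : Type*} [NormedAddCommGroup E] [InnerProductSpace ℝ E]
    [FiniteDimensional ℝ E] [Nontrivial E] [MeasurableSpace E] [BorelSpace E] (μ : Measure E)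
    [μ.IsAddHaarMeasure] {d : ℝ} {H : E → ℝ} (hH : PosHomogeneous d H)
    (hHs : ContDiffOn ℝ 1 H {0}ᶜ) (hpos : ∀ u : sphere (0 : E) 1, 0 < H u) (p : ℝ) :
    (finrank ℝ E + d * (p + 1) - 1) •
        ∫ u : sphere (0 : E) 1, H u ^ (p + 1) • (u : E) ∂μ.toSphere =
      (p + 1) • ∫ u : sphere (0 : E) 1, H u ^ p • ∇ H u ∂μ.toSphere := by
  have hpos' : ∀ x, x ≠ 0 → 0 < H x := fun _ ↦ hH.pos_of_pos_on_sphere hpos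
  have hgrad (u : sphere (0 : E) 1) :
      ∇ (fun x ↦ H x ^ (p + 1)) (u : E) = (p + 1) • H u ^ p • ∇ H (u : E) := by
    have hu : {0}ᶜ ∈ 𝓝 (u : E) := isOpen_compl_singleton.mem_nhds (ne_zero_of_mem_unit_sphere u)
    rw [gradient_rpow_const ((hHs.contDiffAt hu).differentiableAt one_ne_zero)
      (Or.inl (hpos u).ne'), add_sub_cancel_right, mul_smul]
  have hhom : PosHomogeneous (d * (p + 1)) fun x ↦ H x ^ (p + 1) :=
    hH.rpow_const (fun x hx ↦ (hpos' x hx).le) _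
  have hsmooth : ContDiffOn ℝ 1 (fun x ↦ H x ^ (p + 1)) {0}ᶜ :=
    hHs.rpow_const_of_ne fun x hx ↦ (hpos' x hx).ne'
  rw [← integral_smul (p + 1), ← hhom.integral_toSphere_gradient μ hsmooth]
  exact integral_congr_ae (.of_forall hgrad)

/-- For a positive, 1-homogeneous, smooth function `H` and `p ≠ −(n+1)`:
`∫_{S^n} H^{p+1} x dθ = ((p+1)/(n+p+1)) ∫_{S^n} H^p ∇H dθ`. -/
theorem moment_identity (n : ℕ) (hn : 1 ≤ n) (p : ℝ) (hp : p ≠ -((n : ℝ) + 1))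
    (H : Eu n → ℝ) (hsmooth : ContDiffOn ℝ (⊤ : ℕ∞) H {(0 : Eu n)}ᶜ)
    (hhom : ∀ z : Eu n, z ≠ 0 → ∀ t : ℝ, 0 < t → H (t • z) = t * H z)
    (hpos : ∀ x : Sph n, 0 < H (x : Eu n)) :
    ∫ x : Sph n, H (x : Eu n) ^ (p + 1) • (x : Eu n) ∂sphMeas n =
      ((p + 1) / ((n : ℝ) + p + 1)) •
        ∫ x : Sph n, H (x : Eu n) ^ p • gradient H (x : Eu n) ∂sphMeas n := by
  have hp' : (n : ℝ) + p + 1 ≠ 0 := fun h ↦ hp (by linarith)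
  have hhom' : PosHomogeneous 1 H := by simpa [PosHomogeneous] using hhom
  have h := moment_identity_general volume hhom' (hsmooth.of_le (by simp)) hpos p
  rw [div_eq_inv_mul, mul_smul, eq_inv_smul_iff₀ hp', sphMeas, ← h, finrank_euclideanSpace_fin]
  congr 1
  push_cast
  ring
end
end
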